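/- arXiv:2204.12132 — 5 statements merged into one kernel-verified Lean document; each statement's English description precedes it below -/
import Mathlib

section
/- Let $R=k[x,y]$ be a polynomial ring over a field $k$, $\mathfrak{m}=(x,y)$, and $M$ the submodule of $R^2$ generated by $(x,0)$, $(y,x)$, $(0,y)$. Then $xM\cap yM$ is generated by $(x^2y,0)$, $(xy^2,0)$, $(0,x^2y)$, $(0,xy^2)$; consequently $\frac{M}{x}\cap\frac{M}{y}=\mathfrak{m}\oplus\mathfrak{m}$ inside $\mathrm{Q}(R)^2$. -/
open Pointwise MvPolynomial

section

variable {R : Type*} [CommRing R]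

theorem mem_span_syzygy_iff {x y : R} {p : R × R} :
    p ∈ Submodule.span R {(x, 0), (y, x), (0, y)} ↔
      ∃ a b c : R, p = (a * x + b * y, b * x + c * y) := by
  rw [Submodule.mem_span_triple]
  refine exists_congr fun a ↦ exists_congr fun b ↦ exists_congr fun c ↦ ?_
  simp [eq_comm]

theorem mem_span_mul_maximal_iff {x y : R} {p : R × R} :
    p ∈ Submodule.span R
        {(x ^ 2 * y, 0), (x * y ^ 2, 0), (0, x ^ 2 * y), (0, x * y ^ 2)} ↔
      ∃ u ∈ Ideal.span {x, y}, ∃ v ∈ Ideal.span {x, y}, p = (x * y) • (u, v) := by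
  rw [Submodule.mem_span_insert]
  simp only [Submodule.mem_span_triple, Ideal.mem_span_pair]
  constructor
  · rintro ⟨a, _, ⟨b, c, d, rfl⟩, rfl⟩
    refine ⟨_, ⟨a, b, rfl⟩, _, ⟨c, d, rfl⟩, ?_⟩
    ext <;> simp <;> ring
  · rintro ⟨_, ⟨a, b, rfl⟩, _, ⟨c, d, rfl⟩, rfl⟩
    refine ⟨a, _, ⟨b, c, d, rfl⟩, ?_⟩
    ext <;> simp <;> ring

theorem mul_maximal_mem_span_syzygy {x y u v : R} (hu : u ∈ Ideal.span {x, y})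
    (hv : v ∈ Ideal.span {x, y}) :
    x • (u, v) ∈ Submodule.span R {(x, 0), (y, x), (0, y)} ∧
      y • (u, v) ∈ Submodule.span R {(x, 0), (y, x), (0, y)} := by
  rw [Ideal.mem_span_pair] at hu hv
  obtain ⟨a, b, rfl⟩ := hu
  obtain ⟨c, d, rfl⟩ := hv
  rw [mem_span_syzygy_iff, mem_span_syzygy_iff]
  refine ⟨⟨a * x + (b - c) * y, c * x, d * x, ?_⟩, ⟨a * y, b * y, (c - b) * x + d * y, ?_⟩⟩ <;>
    ext <;> simp <;> ring

theorem exists_mem_maximal_of_smul_eq_smul [IsDomain R] {x y : R} (hx : x ≠ 0)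
    (hxy : ∀ a, x ∣ y * a → x ∣ a) (hyx : ∀ a, y ∣ x * a → y ∣ a) {p q : R × R}
    (hp : p ∈ Submodule.span R {(x, 0), (y, x), (0, y)})
    (hq : q ∈ Submodule.span R {(x, 0), (y, x), (0, y)}) (hpq : x • p = y • q) :
    ∃ u ∈ Ideal.span {x, y}, ∃ v ∈ Ideal.span {x, y}, p = y • (u, v) := by
  obtain ⟨a, b, c, rfl⟩ := mem_span_syzygy_iff.1 hp
  obtain ⟨a', b', c', rfl⟩ := mem_span_syzygy_iff.1 hq
  simp only [Prod.ext_iff, Prod.smul_fst, Prod.smul_snd, smul_eq_mul] at hpq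
  obtain ⟨h₁, h₂⟩ := hpq
  obtain ⟨a, rfl⟩ : y ∣ a := hyx _ <| by
    have := hyx _ ⟨_, h₁⟩
    rwa [dvd_add_left (dvd_mul_left _ _), mul_comm] at this
  obtain ⟨b, rfl⟩ : y ∣ b := hyx _ <| by
    have := hyx _ ⟨_, h₂⟩
    rwa [dvd_add_left (dvd_mul_left _ _), mul_comm] at this
  obtain ⟨b', rfl⟩ : x ∣ b' := hxy _ <| by
    have := hxy _ ⟨_, h₁.symm⟩
    rwa [dvd_add_right (dvd_mul_left _ _), mul_comm] at this
  obtain ⟨c', rfl⟩ : x ∣ c' := hxy _ <| by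
    have := hxy _ ⟨_, h₂.symm⟩
    rwa [dvd_add_right (dvd_mul_left _ _), mul_comm] at this
  simp only [Ideal.mem_span_pair]
  refine ⟨_, ⟨a, b, rfl⟩, _, ⟨b', c', rfl⟩, ?_⟩
  ext
  · simp; ring
  · apply mul_left_cancel₀ hx
    simp only [h₂, Prod.smul_mk, smul_eq_mul]
    ring

end

/-- for `R = k[x,y]` and `M = ⟨(x,0),(y,x),(0,y)⟩ ⊆ R²`,
`xM ∩ yM = ⟨(x²y,0),(xy²,0),(0,x²y),(0,xy²)⟩` and consequently
`M/x ∩ M/y = 𝔪 ⊕ 𝔪` inside `Q(R)²`, where `M/a` is realized as the preimage of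
the image `M'` of `M` in `Q(R)²` under multiplication by `a`. -/
theorem stmt3 (k : Type*) [Field k]
    (x y : MvPolynomial (Fin 2) k) (hx : x = X 0) (hy : y = X 1)
    (M : Submodule (MvPolynomial (Fin 2) k)
      (MvPolynomial (Fin 2) k × MvPolynomial (Fin 2) k))
    (hM : M = Submodule.span _ {(x, 0), (y, x), (0, y)})
    (φ : MvPolynomial (Fin 2) k × MvPolynomial (Fin 2) k →ₗ[MvPolynomial (Fin 2) k]
      FractionRing (MvPolynomial (Fin 2) k) × FractionRing (MvPolynomial (Fin 2) k))
    (hφ : φ = (Algebra.linearMap (MvPolynomial (Fin 2) k) (FractionRing (MvPolynomial (Fin 2) k))).prodMap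
      (Algebra.linearMap (MvPolynomial (Fin 2) k) (FractionRing (MvPolynomial (Fin 2) k))))
    (m' : Submodule (MvPolynomial (Fin 2) k) (FractionRing (MvPolynomial (Fin 2) k)))
    (hm' : m' = Submodule.map
      (Algebra.linearMap (MvPolynomial (Fin 2) k) (FractionRing (MvPolynomial (Fin 2) k)))
      (Ideal.span {x, y})) :
    x • M ⊓ y • M =
        Submodule.span _ {(x ^ 2 * y, 0), (x * y ^ 2, 0), (0, x ^ 2 * y), (0, x * y ^ 2)} ∧
      (M.map φ).comap (LinearMap.lsmul _ _ x) ⊓ (M.map φ).comap (LinearMap.lsmul _ _ y) =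
        m'.prod m' := by
  have hxy : ∀ a, x ∣ y * a → x ∣ a := fun a h ↦ by
    subst hx hy
    exact ((X_prime (i := 0)).dvd_or_dvd h).resolve_left (by simp [X_dvd_X])
  have hyx : ∀ a, y ∣ x * a → y ∣ a := fun a h ↦ by
    subst hx hy
    exact ((X_prime (i := 1)).dvd_or_dvd h).resolve_left (by simp [X_dvd_X])
  have hx0 : x ≠ 0 := hx ▸ X_ne_zero 0
  have hy0 : y ≠ 0 := hy ▸ X_ne_zero 1
  have hφinj : Function.Injective φ := by
    rw [hφ]
    exact (IsFractionRing.injective _ _).prodMap (IsFractionRing.injective _ _)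
  have hφmk (u v) : φ (u, v) = (algebraMap _ _ u, algebraMap _ _ v) := by rw [hφ]; rfl
  subst hM hm'
  constructor
  · ext w
    rw [mem_span_mul_maximal_iff, Submodule.mem_inf, Submodule.mem_smul_pointwise_iff_exists,
      Submodule.mem_smul_pointwise_iff_exists]
    constructor
    · rintro ⟨⟨p, hp, rfl⟩, q, hq', hq⟩
      obtain ⟨u, hu, v, hv, rfl⟩ := exists_mem_maximal_of_smul_eq_smul hx0 hxy hyx hp hq' hq.symm
      exact ⟨u, hu, v, hv, smul_smul x y (u, v)⟩
    · rintro ⟨u, hu, v, hv, rfl⟩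
      obtain ⟨h₁, h₂⟩ := mul_maximal_mem_span_syzygy hu hv
      exact ⟨⟨_, h₂, smul_smul x y (u, v)⟩, _, h₁, by rw [smul_smul, mul_comm]⟩
  · ext w
    simp only [Submodule.mem_inf, Submodule.mem_comap, LinearMap.lsmul_apply, Submodule.mem_prod]
    constructor
    · rintro ⟨⟨p, hp, hpw⟩, q, hq, hqw⟩
      have hpq : x • q = y • p := hφinj <| by
        rw [map_smul, map_smul, hpw, hqw, smul_comm]
      obtain ⟨u, hu, v, hv, rfl⟩ := exists_mem_maximal_of_smul_eq_smul hx0 hxy hyx hq hp hpq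
      rw [map_smul] at hqw
      obtain rfl := smul_right_injective _ hy0 hqw
      rw [hφmk]
      exact ⟨⟨u, hu, rfl⟩, v, hv, rfl⟩
    · obtain ⟨w₁, w₂⟩ := w
      rintro ⟨⟨u, hu, rfl⟩, v, hv, rfl⟩
      obtain ⟨h₁, h₂⟩ := mul_maximal_mem_span_syzygy hu hv
      exact ⟨⟨_, h₁, by rw [map_smul, hφmk]; rfl⟩, _, h₂, by rw [map_smul, hφmk]; rfl⟩
end

section
/- Let $R$ be a Noetherian ring satisfying Serre's condition $(S_1)$, $n>0$ an integer, and $N$ a nonzero finitely generated $R$-module. Then $N$ satisfies $(S_n)$ if and only if every sequence $a_1,\dots,a_n$ of non-zerodivisors of $R$ with $\mathrm{ht}_R(a_1,\dots,a_i)\ge i$ for all $1\le i\le n$ is $N$-regular. -/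
open Pointwise RingTheory.Sequence

/-- The height of an ideal. -/
noncomputable def idealHt {R : Type*} [CommRing R] (I : Ideal R) : ℕ∞ :=
  ⨅ p ∈ {p : PrimeSpectrum R | I ≤ p.asIdeal}, Order.height p

/-- Serre's condition `(Sₙ)` for a finitely generated module `N` over a
Noetherian ring `R`: for every prime `p` in the support of `N` (i.e. containing
the annihilator), `depth_{R_p} N_p ≥ min (n, dim R_p)`, expressed by the
existence of a weakly regular sequence on `N_p` of length `min (n, ht p)`
consisting of elements of `p` (which is regular since `N_p` is finitely
generated and nonzero). -/
noncomputable def serreCond (R : Type*) [CommRing R] (N : Type*) [AddCommGroup N]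
    [Module R N] (n : ℕ) : Prop :=
  ∀ (p : Ideal R) (hp : p.IsPrime), Module.annihilator R N ≤ p →
    ∃ l : List R, (∀ x ∈ l, x ∈ p) ∧
      (l.length : ℕ∞) = min (n : ℕ∞) (Order.height (⟨p, hp⟩ : PrimeSpectrum R)) ∧
      IsWeaklyRegular (LocalizedModule p.primeCompl N)
        (l.map (algebraMap R (Localization p.primeCompl)))

/-- `M` admits a weakly regular sequence of length `k` consisting of elements of `I`. -/
def HasWeaklyRegularSeq {R : Type*} [CommRing R] (I : Ideal R) (M : Type*) [AddCommGroup M]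
    [Module R M] (k : ℕ) : Prop :=
  ∃ l : List R, l.length = k ∧ (∀ x ∈ l, x ∈ I) ∧ IsWeaklyRegular M l

namespace HasWeaklyRegularSeq

variable {R : Type*} [CommRing R] {I : Ideal R} {M M' : Type*} [AddCommGroup M] [Module R M]
  [AddCommGroup M'] [Module R M']

lemma mono {k m : ℕ} (h : HasWeaklyRegularSeq I M m) (hkm : k ≤ m) :
    HasWeaklyRegularSeq I M k := by
  obtain ⟨l, rfl, hl, hreg⟩ := h
  refine ⟨l.take k, by simpa using hkm, fun x hx => hl x (List.mem_of_mem_take hx), ?_⟩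
  rw [← List.take_append_drop k l, isWeaklyRegular_append_iff] at hreg
  exact hreg.1

lemma congr {k : ℕ} (e : M ≃ₗ[R] M') (h : HasWeaklyRegularSeq I M k) :
    HasWeaklyRegularSeq I M' k := by
  obtain ⟨l, hk, hl, hreg⟩ := h
  exact ⟨l, hk, hl, (e.isWeaklyRegular_congr l).mp hreg⟩

lemma succ_iff {k : ℕ} : HasWeaklyRegularSeq I M (k + 1) ↔
    ∃ x ∈ I, IsSMulRegular M x ∧ HasWeaklyRegularSeq I (QuotSMulTop x M) k := by
  constructor
  · rintro ⟨_ | ⟨x, l⟩, hk, hl, hreg⟩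
    · simp at hk
    · rw [isWeaklyRegular_cons_iff] at hreg
      exact ⟨x, hl x (by simp), hreg.1, l, by simpa using hk,
        fun y hy => hl y (by simp [hy]), hreg.2⟩
  · rintro ⟨x, hx, hreg, l, hk, hl, hreg'⟩
    exact ⟨x :: l, by simp [hk], by simpa [hx] using hl, IsWeaklyRegular.cons hreg hreg'⟩

end HasWeaklyRegularSeq

section Depth

variable {R : Type*} [CommRing R] {I : Ideal R} {M : Type*} [AddCommGroup M] [Module R M]

lemma exists_isSMulRegular_iff [IsNoetherianRing R] [Module.Finite R M] :
    (∃ z ∈ I, IsSMulRegular M z) ↔ ∀ m : M, (∀ r ∈ I, r • m = 0) → m = 0 := by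
  constructor
  · rintro ⟨z, hz, hreg⟩ m hm
    exact hreg.right_eq_zero_of_smul (hm z hz)
  · intro h
    by_contra! hI
    have hsub : (I : Set R) ⊆ ⋃ p ∈ associatedPrimes R M, (p : Set R) := by
      rw [biUnion_associatedPrimes_eq_compl_regular]
      exact hI
    obtain ⟨p, hp, hIp⟩ := (I.subset_union_prime_finite (associatedPrimes.finite R M)
      (f := id) 0 0 fun _ h _ _ => h.1).1 hsub
    obtain ⟨hpp, x, hx⟩ := isAssociatedPrime_iff.mp hp
    have hx0 : x = 0 := h x fun r hr => by
      have := hIp hr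
      rw [id, hx, Submodule.mem_colon_singleton] at this
      simpa using this
    exact hpp.ne_top (by simp [hx, hx0])

lemma isSMulRegular_quotSMulTop_iff {x r : R} :
    IsSMulRegular (QuotSMulTop x M) r ↔ ∀ m w : M, r • m = x • w → ∃ u, m = x • u := by
  rw [isSMulRegular_quotient_iff_mem_of_smul_mem]
  simp only [Submodule.mem_smul_pointwise_iff_exists, Submodule.mem_top, true_and]
  exact ⟨fun h m w hmw => (h m ⟨w, hmw.symm⟩).imp fun _ => Eq.symm,
    fun h m ⟨w, hmw⟩ => (h m w hmw.symm).imp fun _ => Eq.symm⟩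

lemma IsSMulRegular.quotSMulTop_swap {x y : R} (hx : IsSMulRegular M x)
    (hy : IsSMulRegular (QuotSMulTop x M) y) : IsSMulRegular (QuotSMulTop y M) x := by
  rw [isSMulRegular_quotSMulTop_iff] at hy ⊢
  intro m w h
  obtain ⟨u, rfl⟩ := hy w m h.symm
  exact ⟨u, hx (by simpa only [smul_comm y x u] using h)⟩

/-- Whether every element of `I` is a zero divisor on `M ⧸ xM` does not depend on the choice of
the `M`-regular element `x ∈ I`. -/
lemma exists_isSMulRegular_quotSMulTop [IsNoetherianRing R] [Module.Finite R M] {x y : R}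
    (hxI : x ∈ I) (hx : IsSMulRegular M x) (hy : IsSMulRegular M y)
    (h : ∃ z ∈ I, IsSMulRegular (QuotSMulTop x M) z) :
    ∃ z ∈ I, IsSMulRegular (QuotSMulTop y M) z := by
  obtain ⟨z, hzI, hz⟩ := h
  rw [isSMulRegular_quotSMulTop_iff] at hz
  rw [exists_isSMulRegular_iff]
  intro m hm
  obtain ⟨w, rfl⟩ := Submodule.Quotient.mk_surjective _ m
  have hmem : ∀ r ∈ I, ∃ u, r • w = y • u := by
    intro r hr
    have := hm r hr
    rw [← Submodule.Quotient.mk_smul, Submodule.Quotient.mk_eq_zero,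
      Submodule.mem_smul_pointwise_iff_exists] at this
    obtain ⟨u, -, hu⟩ := this
    exact ⟨u, hu.symm⟩
  obtain ⟨u, hu⟩ := hmem x hxI
  obtain ⟨v, hv⟩ := hmem z hzI
  have hzu : z • u = x • v := hy (by
    simp only
    rw [smul_comm y z, ← hu, smul_comm y x, ← hv, smul_comm])
  obtain ⟨t, rfl⟩ := hz u v hzu
  have hwt : w = y • t := hx (by simpa only [smul_comm y x t] using hu)
  rw [Submodule.Quotient.mk_eq_zero, Submodule.mem_smul_pointwise_iff_exists]
  exact ⟨t, trivial, hwt.symm⟩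

/-- Commuting the two quotients `M ⧸ xM` and `M ⧸ yM`. -/
noncomputable def quotSMulTopComm (x y : R) (M : Type*) [AddCommGroup M] [Module R M] :
    QuotSMulTop x (QuotSMulTop y M) ≃ₗ[R] QuotSMulTop y (QuotSMulTop x M) :=
  (QuotSMulTop.equivTensorQuot x (QuotSMulTop y M)).trans <|
    (QuotSMulTop.quotSMulTopTensorEquivQuotSMulTop y (R ⧸ Ideal.span {x}) M).trans <|
      QuotSMulTop.congr y (QuotSMulTop.equivTensorQuot x M).symm

/-- Dividing out an `M`-regular element of `I` lowers the length of the weakly regular sequences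
in `I` by one. -/
lemma HasWeaklyRegularSeq.quotSMulTop [IsNoetherianRing R] [Module.Finite R M] {k : ℕ} {y : R}
    (h : HasWeaklyRegularSeq I M (k + 1)) (hyI : y ∈ I) (hy : IsSMulRegular M y) :
    HasWeaklyRegularSeq I (QuotSMulTop y M) k := by
  induction k generalizing M y with
  | zero => exact ⟨[], rfl, by simp, .nil R _⟩
  | succ k ih =>
    obtain ⟨x, hxI, hx, hk⟩ := succ_iff.mp h
    obtain ⟨w, hwI, hw, -⟩ := succ_iff.mp hk
    have hxz := exists_isSMulRegular_iff.mp ⟨w, hwI, hw⟩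
    have hyz := exists_isSMulRegular_iff.mp
      (exists_isSMulRegular_quotSMulTop hxI hx hy ⟨w, hwI, hw⟩)
    have hMz := exists_isSMulRegular_iff.mp ⟨x, hxI, hx⟩
    obtain ⟨z, hzI, hz⟩ :
        ∃ z ∈ I, IsSMulRegular (M × QuotSMulTop x M × QuotSMulTop y M) z := by
      refine exists_isSMulRegular_iff.mpr fun m hm => ?_
      simp only [Prod.ext_iff, Prod.smul_fst, Prod.smul_snd, Prod.fst_zero, Prod.snd_zero] at hm ⊢
      exact ⟨hMz _ fun r hr => (hm r hr).1, hxz _ fun r hr => (hm r hr).2.1,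
        hyz _ fun r hr => (hm r hr).2.2⟩
    rw [isSMulRegular_iff_right_eq_zero_of_smul] at hz
    have hzM : IsSMulRegular M z := .of_right_eq_zero_of_smul fun m hm => by
      simpa using hz (m, 0, 0) (by simp [hm])
    have hzx : IsSMulRegular (QuotSMulTop x M) z := .of_right_eq_zero_of_smul fun m hm => by
      simpa using hz (0, m, 0) (by simp [hm])
    have hzy : IsSMulRegular (QuotSMulTop y M) z := .of_right_eq_zero_of_smul fun m hm => by
      simpa using hz (0, 0, m) (by simp [hm])
    have hMz : HasWeaklyRegularSeq I (QuotSMulTop z M) (k + 1) :=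
      succ_iff.mpr ⟨x, hxI, hx.quotSMulTop_swap hzx, (ih hk hzI hzx).congr (quotSMulTopComm z x M)⟩
    exact succ_iff.mpr
      ⟨z, hzI, hzy, (ih hMz hyI (hy.quotSMulTop_swap hzy)).congr (quotSMulTopComm y z M)⟩

end Depth

section Localization

variable {R : Type*} [CommRing R] {M : Type*} [AddCommGroup M] [Module R M]

/-- Localization commutes with `QuotSMulTop`. -/
noncomputable def localizedQuotSMulTopEquiv (S : Submonoid R) (a : R) (M : Type*) [AddCommGroup M]
    [Module R M] :
    QuotSMulTop (algebraMap R (Localization S) a) (LocalizedModule S M) ≃ₗ[Localization S]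
      LocalizedModule S (QuotSMulTop a M) :=
  (QuotSMulTop.congr _ (IsLocalizedModule.isBaseChange S (Localization S)
      (LocalizedModule.mkLinearMap S M)).equiv.symm).trans <|
    (QuotSMulTop.algebraMapTensorEquivTensorQuotSMulTop a M (Localization S)).trans
      (IsLocalizedModule.isBaseChange S (Localization S)
        (LocalizedModule.mkLinearMap S (QuotSMulTop a M))).equiv

lemma IsAssociatedPrime.not_hasWeaklyRegularSeq_localizedModule [IsNoetherianRing R]
    {p : Ideal R} [p.IsPrime] (h : IsAssociatedPrime p M) :
    ¬ HasWeaklyRegularSeq (p.map (algebraMap R (Localization p.primeCompl)))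
      (LocalizedModule p.primeCompl M) 1 := by
  intro hreg
  obtain ⟨z, hz, hzreg, -⟩ := HasWeaklyRegularSeq.succ_iff.mp hreg
  obtain ⟨-, x, hx⟩ := isAssociatedPrime_iff.mp h
  have hker : p.map (algebraMap R (Localization p.primeCompl)) ≤ LinearMap.ker
      (LinearMap.toSpanSingleton (Localization p.primeCompl) _
        (LocalizedModule.mkLinearMap p.primeCompl M x)) := by
    refine Ideal.map_le_iff_le_comap.mpr fun r hr => ?_
    rw [hx, Submodule.mem_colon_singleton, Submodule.mem_bot] at hr
    change algebraMap R (Localization p.primeCompl) r •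
      LocalizedModule.mkLinearMap p.primeCompl M x = 0
    rw [algebraMap_smul, ← map_smul, hr, map_zero]
  have h0 := hzreg.right_eq_zero_of_smul (hker hz)
  obtain ⟨s, hs⟩ := (IsLocalizedModule.eq_zero_iff p.primeCompl
    (LocalizedModule.mkLinearMap p.primeCompl M)).mp h0
  have hsp : (s : R) ∈ (⊥ : Submodule R M).colon {x} := by
    rw [Submodule.mem_colon_singleton, Submodule.mem_bot]
    exact hs
  exact s.2 (hx.ge hsp)

/-- A sequence is weakly regular as soon as the depth of the localizations at primes containing
an initial segment is at least the length of this segment. -/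
lemma isWeaklyRegular_of_hasWeaklyRegularSeq_localizedModule [IsNoetherianRing R]
    [Module.Finite R M] (l : List R)
    (h : ∀ i < l.length, ∀ (p : Ideal R) [p.IsPrime], Module.annihilator R M ≤ p →
      (∀ x ∈ l.take (i + 1), x ∈ p) →
      HasWeaklyRegularSeq (p.map (algebraMap R (Localization p.primeCompl)))
        (LocalizedModule p.primeCompl M) (i + 1)) :
    IsWeaklyRegular M l := by
  induction l generalizing M with
  | nil => exact .nil R M
  | cons a l ih =>
    have ha : IsSMulRegular M a := by
      by_contra hna
      have hmem : a ∈ ⋃ p ∈ associatedPrimes R M, (p : Set R) := by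
        rw [biUnion_associatedPrimes_eq_compl_regular]
        exact hna
      simp only [Set.mem_iUnion, exists_prop] at hmem
      obtain ⟨p, hp, hap⟩ := hmem
      have := hp.1
      refine IsAssociatedPrime.not_hasWeaklyRegularSeq_localizedModule hp
        (h 0 (by simp) p ?_ (by simpa using hap))
      simpa only [Submodule.annihilator_top] using hp.annihilator_le
    refine IsWeaklyRegular.cons ha (ih fun i hi p _ hp hl => ?_)
    have hap : a ∈ p := hp (QuotSMulTop.mem_annihilator M a)
    have hM : Module.annihilator R M ≤ p :=
      (LinearMap.annihilator_le_of_surjective (Submodule.mkQ (a • (⊤ : Submodule R M)))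
        (Submodule.mkQ_surjective _)).trans hp
    have hreg := h (i + 1) (by simpa using hi) p hM (by simpa [hap] using hl)
    refine (hreg.quotSMulTop (Ideal.mem_map_of_mem _ hap) ?_).congr
      (localizedQuotSMulTopEquiv p.primeCompl a M)
    have := ((isWeaklyRegular_singleton_iff M a).mpr ha).of_isLocalizedModule
      (Localization p.primeCompl) p.primeCompl (LocalizedModule.mkLinearMap p.primeCompl M)
    simpa [isWeaklyRegular_singleton_iff] using this

end Localization

section Height

variable {R : Type*} [CommRing R]

lemma le_idealHt_iff {I : Ideal R} {k : ℕ∞} :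
    k ≤ idealHt I ↔ ∀ q : PrimeSpectrum R, I ≤ q.asIdeal → k ≤ Order.height q := by
  simp [idealHt]

lemma serreCond.hasWeaklyRegularSeq {M : Type*} [AddCommGroup M] [Module R M] {n k : ℕ}
    (h : serreCond R M n) {p : Ideal R} [hp : p.IsPrime] (hM : Module.annihilator R M ≤ p)
    (hkn : k ≤ n) (hk : (k : ℕ∞) ≤ Order.height (⟨p, hp⟩ : PrimeSpectrum R)) :
    HasWeaklyRegularSeq (p.map (algebraMap R (Localization p.primeCompl)))
      (LocalizedModule p.primeCompl M) k := by
  obtain ⟨l, hlp, hlen, hreg⟩ := h p hp hM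
  refine HasWeaklyRegularSeq.mono (m := l.length) ⟨_, by simp, ?_, hreg⟩ ?_
  · simpa using fun x hx => Ideal.mem_map_of_mem _ (hlp x hx)
  · rw [← Nat.cast_le (α := ℕ∞), hlen]
    exact le_min (Nat.cast_le.mpr hkn) hk

lemma IsAssociatedPrime.height_eq_zero_of_serreCond [IsNoetherianRing R] (h : serreCond R R 1)
    {q : PrimeSpectrum R} (hq : IsAssociatedPrime q.asIdeal R) : Order.height q = 0 := by
  by_contra hne
  refine IsAssociatedPrime.not_hasWeaklyRegularSeq_localizedModule hq
    (h.hasWeaklyRegularSeq (by simpa only [Submodule.annihilator_top] using hq.annihilator_le) le_rfl ?_)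
  simpa using Order.one_le_iff_ne_zero.mpr hne

/-- Over a Noetherian ring satisfying `(S₁)`, a prime of height at least `m` contains a sequence
of `m` non-zerodivisors all of whose initial segments generate ideals of maximal height. -/
lemma exists_nonZeroDivisors_le_idealHt [IsNoetherianRing R] (h : serreCond R R 1)
    (p : PrimeSpectrum R) (m : ℕ) (hm : (m : ℕ∞) ≤ Order.height p) :
    ∃ l : List R, l.length = m ∧ (∀ x ∈ l, x ∈ p.asIdeal) ∧ (∀ x ∈ l, x ∈ nonZeroDivisors R) ∧
      ∀ i ≤ m, (i : ℕ∞) ≤ idealHt (Ideal.ofList (l.take i)) := by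
  induction m with
  | zero => exact ⟨[], by simp⟩
  | succ m ih =>
    obtain ⟨l, hlen, hlp, hlz, hht⟩ := ih (le_trans (by simp) hm)
    let S : Set (PrimeSpectrum R) := PrimeSpectrum.asIdeal ⁻¹' associatedPrimes R R ∪
      {q | q.asIdeal ∈ (Ideal.ofList l).minimalPrimes ∧ Order.height q < (m + 1 : ℕ)}
    have hinj : Function.Injective (PrimeSpectrum.asIdeal (R := R)) :=
      fun _ _ => PrimeSpectrum.ext
    have hS : S.Finite := ((associatedPrimes.finite R R).preimage hinj.injOn).union
      (((Ideal.finite_minimalPrimes_of_isNoetherianRing R _).preimage hinj.injOn).subset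
        fun q hq => hq.1)
    have hheight : ∀ q ∈ S, Order.height q < (m + 1 : ℕ) := by
      rintro q (hq | hq)
      · rw [IsAssociatedPrime.height_eq_zero_of_serreCond h hq]
        simp
      · exact hq.2
    have hpS : ¬ (p.asIdeal : Set R) ⊆ ⋃ q ∈ S, (q.asIdeal : Set R) := by
      rw [Ideal.subset_union_prime_finite hS p p fun q _ _ _ => q.2]
      rintro ⟨q, hqS, hpq⟩
      exact ((hm.trans (Order.height_mono hpq)).trans_lt (hheight q hqS)).false
    obtain ⟨a, hap, haS⟩ := Set.not_subset.mp hpS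
    simp only [Set.mem_iUnion, exists_prop, not_exists, not_and] at haS
    refine ⟨l ++ [a], by simp [hlen], ?_, ?_, fun i hi => ?_⟩
    · simpa [or_imp, forall_and] using ⟨hlp, hap⟩
    · suffices a ∈ nonZeroDivisors R by simpa [or_imp, forall_and] using ⟨hlz, this⟩
      by_contra ha
      have : a ∈ ⋃ q ∈ associatedPrimes R R, (q : Set R) := by
        rw [biUnion_associatedPrimes_eq_compl_nonZeroDivisors]
        exact ha
      simp only [Set.mem_iUnion, exists_prop] at this
      obtain ⟨q, hq, haq⟩ := this
      exact haS ⟨q, hq.1⟩ (.inl hq) haq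
    · obtain hi | rfl := hi.lt_or_eq
      · rw [List.take_append_of_le_length (by omega)]
        exact hht i (by omega)
      · rw [List.take_of_length_le (by simp [hlen]), le_idealHt_iff]
        intro q hq
        simp only [Ideal.ofList_append, Ideal.ofList_singleton, sup_le_iff,
          Ideal.span_singleton_le_iff_mem] at hq
        obtain ⟨q', hq', hle⟩ := Ideal.exists_minimalPrimes_le hq.1
        let Q : PrimeSpectrum R := ⟨q', hq'.1.1⟩
        have hQq : Q ≤ q := hle
        by_cases hQ : Order.height Q < (m + 1 : ℕ)
        · have hlt : Q < q := lt_of_le_of_ne hQq fun heq => haS Q (.inr ⟨hq', hQ⟩) (heq ▸ hq.2)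
          have hmQ : (m : ℕ∞) ≤ Order.height Q := by
            have := hht m le_rfl
            rw [List.take_of_length_le hlen.le, le_idealHt_iff] at this
            exact this Q hq'.1.2
          push_cast
          exact (add_le_add_left hmQ 1).trans (Order.height_add_one_le hlt)
        · exact (not_lt.mp hQ).trans (Order.height_mono hQq)

end Height

/-- over a Noetherian ring `R` satisfying `(S₁)`, a nonzero
finitely generated module `N` satisfies `(Sₙ)` iff every sequence
`a₁, …, aₙ` of non-zerodivisors of `R` with `ht (a₁, …, aᵢ) ≥ i` for all
`1 ≤ i ≤ n` is `N`-regular (in the weak sense, not requiring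
`N/(a₁,…,aₙ)N ≠ 0`). -/
theorem stmt8 {R : Type*} [CommRing R] [IsNoetherianRing R]
    (hS1 : serreCond R R 1)
    {N : Type*} [AddCommGroup N] [Module R N] [Module.Finite R N] [Nontrivial N]
    (n : ℕ) (hn : 0 < n) :
    serreCond R N n ↔
      ∀ l : List R, l.length = n → (∀ x ∈ l, x ∈ nonZeroDivisors R) →
        (∀ i : ℕ, 1 ≤ i → i ≤ n → (i : ℕ∞) ≤ idealHt (Ideal.ofList (l.take i))) →
        IsWeaklyRegular N l := by
  constructor
  · intro hN l hlen _ hht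
    refine isWeaklyRegular_of_hasWeaklyRegularSeq_localizedModule l fun i hi p hp hM hl => ?_
    refine hN.hasWeaklyRegularSeq hM (by omega) ?_
    exact le_idealHt_iff.mp (hht (i + 1) (by omega) (by omega)) ⟨p, hp⟩ (Ideal.span_le.mpr hl)
  · intro H p hp hM
    obtain ⟨m, hm⟩ : ∃ m : ℕ,
        (m : ℕ∞) = min (n : ℕ∞) (Order.height (⟨p, hp⟩ : PrimeSpectrum R)) :=
      ENat.ne_top_iff_exists.mp (ne_top_of_le_ne_top (ENat.natCast_ne_top n) (min_le_left _ _))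
    have hmn : m ≤ n := Nat.cast_le.mp (hm.trans_le (min_le_left _ _))
    obtain ⟨l, hlen, hlp, hlz, hht⟩ :=
      exists_nonZeroDivisors_le_idealHt hS1 ⟨p, hp⟩ m (hm.trans_le (min_le_right _ _))
    refine ⟨l, hlp, by rw [hlen, hm], ?_⟩
    have hreg : IsWeaklyRegular N (l ++ List.replicate (n - m) 1) := by
      refine H _ (by simp [hlen, hmn]) ?_ fun i _ hin => ?_
      · intro x hx
        obtain hx | hx := List.mem_append.mp hx
        · exact hlz x hx
        · rw [List.eq_of_mem_replicate hx]
          exact one_mem _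
      · obtain him | him := le_or_gt i m
        · rw [List.take_append_of_le_length (by omega)]
          exact hht i him
        · refine le_idealHt_iff.mpr fun q hq => absurd (hq (Ideal.subset_span ?_)) q.2.one_notMem
          simp only [Set.mem_ofPred_eq, List.take_append, List.mem_append, List.take_replicate,
            List.mem_replicate]
          exact .inr ⟨by omega, trivial⟩
    exact ((isWeaklyRegular_append_iff N _ _).mp hreg).1.of_isLocalizedModule
      (Localization p.primeCompl) p.primeCompl (LocalizedModule.mkLinearMap p.primeCompl N)
end

section
/- Let $R$ be a Noetherian ring which is locally quasi-unmixed and satisfies $(S_1)$, and let $M$ be a finitely generated torsion-free $R$-module. Then $\dim_{R_\mathfrak{p}}M_\mathfrak{p}=\dim R_\mathfrak{p}$ for every $\mathfrak{p}\in\mathrm{Supp}_R M$. -/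
/-- A Noetherian local ring is quasi-unmixed if all minimal primes of its
`𝔪`-adic completion have the same codimension, i.e. `dim Â/q = dim Â` for every
minimal prime `q` of `Â`. -/
def QuasiUnmixed (A : Type*) [CommRing A] [IsLocalRing A] : Prop :=
  ∀ q ∈ minimalPrimes (AdicCompletion (IsLocalRing.maximalIdeal A) A),
    ringKrullDim (AdicCompletion (IsLocalRing.maximalIdeal A) A ⧸ q) =
      ringKrullDim (AdicCompletion (IsLocalRing.maximalIdeal A) A)

/-- A ring is locally quasi-unmixed if all its localizations at primes are
quasi-unmixed. -/
def LocallyQuasiUnmixed (R : Type*) [CommRing R] : Prop :=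
  ∀ (p : Ideal R) [p.IsPrime], QuasiUnmixed (Localization.AtPrime p)

/-- The adic completion of a Noetherian ring at any ideal is Noetherian: it is a quotient of a
power series ring in finitely many variables. -/
theorem AdicCompletion.isNoetherianRing_of_isNoetherianRing {A : Type*} [CommRing A]
    [IsNoetherianRing A] (I : Ideal A) : IsNoetherianRing (AdicCompletion I A) := by
  obtain ⟨s, hs⟩ := I.fg_of_isNoetherianRing
  let φ : MvPolynomial s A →ₐ[A] A := MvPolynomial.aeval Subtype.val
  have hφX : (MvPolynomial.idealOfVars s A).map φ = I := by
    rw [MvPolynomial.idealOfVars, Ideal.map_span, ← Set.range_comp, ← hs]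
    congr 1
    ext x
    simp [φ]
  have hφ (n : ℕ) : MvPolynomial.idealOfVars s A ^ n ≤ (I ^ n).comap φ := by
    rw [← Ideal.map_le_iff_le_comap, Ideal.map_pow, hφX]
  let f (n : ℕ) : MvPowerSeries s A →+* A ⧸ I ^ n :=
    (Ideal.quotientMap (I ^ n) φ.toRingHom (hφ n)).comp
      (MvPowerSeries.truncTotalAlgHom s A n).toRingHom
  have f_apply (n : ℕ) (x : MvPowerSeries s A) :
      f n x = Ideal.Quotient.mk (I ^ n) (φ (MvPowerSeries.truncTotal n x)) := rfl
  have f_coe (n : ℕ) (x : MvPolynomial s A) : f n x = Ideal.Quotient.mk (I ^ n) (φ x) := by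
    have := (MvPowerSeries.truncTotalAlgHom s A n).commutes x
    exact congrArg (Ideal.quotientMap (I ^ n) φ.toRingHom (hφ n)) this
  let F : MvPowerSeries s A →+* AdicCompletion I A := AdicCompletion.liftRingHom I f <| by
    intro m n h
    ext x
    simp only [RingHom.comp_apply, f_apply]
    change Ideal.Quotient.mk (I ^ m) _ = _
    rw [Ideal.Quotient.eq, ← map_sub]
    exact hφ m (MvPowerSeries.truncTotal_sub_truncTotal_mem_pow_idealOfVars h le_rfl x)
  have F_coe (x : MvPolynomial s A) : F x = algebraMap A (AdicCompletion I A) (φ x) := by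
    refine AdicCompletion.ext_evalₐ fun n ↦ ?_
    rw [AdicCompletion.evalₐ_liftRingHom, f_coe, AlgHom.commutes]
    rfl
  have hmap : (Ideal.span (Set.range MvPowerSeries.X)).map F =
      I.map (algebraMap A (AdicCompletion I A)) := by
    refine Eq.trans ?_ (congrArg (Ideal.map (algebraMap A (AdicCompletion I A))) hφX)
    rw [Ideal.map_span, Ideal.map_span, Ideal.map_span, ← Set.range_comp, ← Set.range_comp,
      ← Set.range_comp]
    congr 2
    ext1 i
    simp [← MvPolynomial.coe_X, F_coe]
  have := AdicCompletion.isAdicComplete_self I I.fg_of_isNoetherianRing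
  have : IsHausdorff ((Ideal.span (Set.range MvPowerSeries.X)).map F) (AdicCompletion I A) :=
    hmap ▸ inferInstance
  suffices h : Function.Surjective
      ((Ideal.Quotient.mk ((Ideal.span (Set.range MvPowerSeries.X)).map F)).comp F) from
    isNoetherianRing_of_surjective _ _ F (surjective_of_mk_map_comp_surjective F h)
  intro y
  obtain ⟨y, rfl⟩ := Ideal.Quotient.mk_surjective y
  obtain ⟨a, ha⟩ := Ideal.Quotient.mk_surjective (AdicCompletion.evalOneₐ I y)
  refine ⟨((MvPolynomial.C a : MvPolynomial s A) : MvPowerSeries s A), ?_⟩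
  rw [RingHom.comp_apply, F_coe, Ideal.Quotient.eq, hmap,
    ← AdicCompletion.ker_evalOneₐ_eq_map I I.fg_of_isNoetherianRing, RingHom.mem_ker]
  have : φ (MvPolynomial.C a) = a := by simp [φ]
  rw [this, map_sub, sub_eq_zero]
  exact ((AdicCompletion.evalOneₐ I).commutes a).trans ha

/-- If the maximal ideal of a Noetherian local `A`-algebra `B` is extended from the maximal ideal of
the Noetherian local ring `A`, then `dim B ≤ dim A`. -/
theorem ringKrullDim_le_of_map_maximalIdeal_eq {A B : Type*} [CommRing A] [CommRing B]
    [IsLocalRing A] [IsLocalRing B] [IsNoetherianRing A] [IsNoetherianRing B] [Algebra A B]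
    (h : (IsLocalRing.maximalIdeal A).map (algebraMap A B) = IsLocalRing.maximalIdeal B) :
    ringKrullDim B ≤ ringKrullDim A := by
  have : (IsLocalRing.maximalIdeal B).LiesOver (IsLocalRing.maximalIdeal A) := by
    refine ⟨(IsLocalRing.maximalIdeal.isMaximal A).eq_of_le Ideal.IsPrime.ne_top' ?_⟩
    rw [Ideal.under_def, ← Ideal.map_le_iff_le_comap, h]
  have key := Ideal.height_le_height_add_of_liesOver (IsLocalRing.maximalIdeal A)
    (IsLocalRing.maximalIdeal B)
  have : Nontrivial (B ⧸ (IsLocalRing.maximalIdeal A).map (algebraMap A B)) :=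
    Ideal.Quotient.nontrivial_iff.mpr (h ▸ Ideal.IsPrime.ne_top')
  have hbot : (IsLocalRing.maximalIdeal B).map
      (Ideal.Quotient.mk ((IsLocalRing.maximalIdeal A).map (algebraMap A B))) = ⊥ := by
    rw [← h, Ideal.map_quotient_self]
  rw [hbot, Ideal.height_bot, add_zero] at key
  rw [← IsLocalRing.maximalIdeal_height_eq_ringKrullDim,
    ← IsLocalRing.maximalIdeal_height_eq_ringKrullDim]
  exact WithBot.coe_le_coe.mpr key

/-- A quasi-unmixed Noetherian local ring is equidimensional. -/
theorem QuasiUnmixed.ringKrullDim_quotient_eq {A : Type*} [CommRing A] [IsLocalRing A]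
    [IsNoetherianRing A] (hA : QuasiUnmixed A) {q : Ideal A} (hq : q ∈ minimalPrimes A) :
    ringKrullDim (A ⧸ q) = ringKrullDim A := by
  refine le_antisymm (ringKrullDim_quotient_le q) ?_
  let m := IsLocalRing.maximalIdeal A
  let B := AdicCompletion m A
  have : IsNoetherianRing B := AdicCompletion.isNoetherianRing_of_isNoetherianRing m
  have hmB : m.map (algebraMap A B) = IsLocalRing.maximalIdeal B :=
    (AdicCompletion.maximalIdeal_eq_map (R := A)).symm
  have : (IsLocalRing.maximalIdeal B).LiesOver m :=
    ⟨(IsLocalRing.maximalIdeal_comap (algebraMap A B)).symm⟩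
  have := hq.isPrime
  obtain ⟨Q₀, -, _, hQ₀⟩ := Ideal.exists_ideal_le_liesOver_of_le (IsLocalRing.maximalIdeal B)
    (IsLocalRing.le_maximalIdeal hq.isPrime.ne_top : q ≤ m)
  obtain ⟨Q, hQ, hQQ₀⟩ := Ideal.exists_minimalPrimes_le (bot_le : ⊥ ≤ Q₀)
  have := hQ.isPrime
  have hqQ : q.map (algebraMap A B) ≤ Q := by
    rw [Ideal.map_le_iff_le_comap]
    refine hq.2 ⟨inferInstance, bot_le⟩ ?_
    rw [hQ₀.over]
    exact Ideal.comap_mono hQQ₀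
  have hqm : q.map (algebraMap A B) ≠ ⊤ := fun h ↦ hQ.isPrime.ne_top (top_le_iff.mp (h ▸ hqQ))
  have := Ideal.Quotient.nontrivial_iff.mpr hqm
  have : IsLocalRing (B ⧸ q.map (algebraMap A B)) :=
    IsLocalRing.of_surjective' _ Ideal.Quotient.mk_surjective
  have : IsLocalRing (A ⧸ q) := IsLocalRing.of_surjective' _ Ideal.Quotient.mk_surjective
  calc ringKrullDim A = m.height := IsLocalRing.maximalIdeal_height_eq_ringKrullDim.symm
    _ ≤ (IsLocalRing.maximalIdeal B).height := by
      rw [Ideal.height_eq_height_add_of_liesOver_of_hasGoingDown m (IsLocalRing.maximalIdeal B)]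
      exact WithBot.coe_le_coe.mpr le_self_add
    _ = ringKrullDim B := IsLocalRing.maximalIdeal_height_eq_ringKrullDim
    _ = ringKrullDim (B ⧸ Q) := (hA Q hQ).symm
    _ ≤ ringKrullDim (B ⧸ q.map (algebraMap A B)) :=
      ringKrullDim_le_of_surjective _ (Ideal.Quotient.factor_surjective hqQ)
    _ ≤ ringKrullDim (A ⧸ q) := by
      refine ringKrullDim_le_of_map_maximalIdeal_eq ?_
      rw [← IsLocalRing.map_maximalIdeal_of_surjective _ (Ideal.Quotient.mk_surjective (I := q)),
        ← IsLocalRing.map_maximalIdeal_of_surjective _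
          (Ideal.Quotient.mk_surjective (I := q.map (algebraMap A B))),
        ← hmB, Ideal.map_map, Ideal.map_map]
      rfl

/-- If `R` has no embedded primes, every associated prime of a torsion-free module is minimal. -/
theorem mem_minimalPrimes_of_mem_associatedPrimes_of_torsionFree {R : Type*} [CommRing R]
    [IsNoetherianRing R] (hS1 : associatedPrimes R R = minimalPrimes R)
    {M : Type*} [AddCommGroup M] [Module R M]
    (htf : ∀ r ∈ nonZeroDivisors R, Function.Injective fun x : M => r • x)
    {q : Ideal R} (hq : q ∈ associatedPrimes R M) : q ∈ minimalPrimes R := by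
  obtain ⟨hprime, x, hx⟩ := isAssociatedPrime_iff.mp hq
  have hdisj : (q : Set R) ⊆ (nonZeroDivisors R : Set R)ᶜ := by
    intro r hr hr'
    have h0 : r • x = 0 := by
      rwa [hx, SetLike.mem_coe, Submodule.mem_colon_singleton] at hr
    have : x = 0 := htf r hr' (by simpa using h0)
    exact hprime.ne_top (by simp [hx, this])
  obtain ⟨P, hP, hqP⟩ := (q.subset_union_prime_finite (associatedPrimes.finite R R) (f := id) 0 0
    fun _ h _ _ ↦ h.1).1 (biUnion_associatedPrimes_eq_compl_nonZeroDivisors R ▸ hdisj)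
  rw [hS1] at hP
  exact le_antisymm hqP (hP.2 ⟨hprime, bot_le⟩ hqP) ▸ hP

/-- if `R` is a locally quasi-unmixed Noetherian ring satisfying
`(S₁)` (i.e. `Ass R = Min R`) and `M` is a finitely generated torsion-free
`R`-module, then `dim_{R_p} M_p = dim R_p` for every prime `p` in the support
of `M`, where `dim_{R_p} M_p = dim (R_p / ann M_p)`. -/
theorem stmt10 {R : Type*} [CommRing R] [IsNoetherianRing R]
    (hqu : LocallyQuasiUnmixed R)
    (hS1 : associatedPrimes R R = minimalPrimes R)
    {M : Type*} [AddCommGroup M] [Module R M] [Module.Finite R M]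
    (htf : ∀ r ∈ nonZeroDivisors R, Function.Injective fun x : M => r • x) :
    ∀ (p : Ideal R) [p.IsPrime], Module.annihilator R M ≤ p →
      ringKrullDim (Localization.AtPrime p ⧸
          Module.annihilator (Localization.AtPrime p) (LocalizedModule p.primeCompl M)) =
        ringKrullDim (Localization.AtPrime p) := by
  intro p _ hp
  let Rp := Localization.AtPrime p
  let Mp := LocalizedModule p.primeCompl M
  have : Nontrivial Mp := by
    rw [← Module.mem_support_iff (p := ⟨p, inferInstance⟩), Module.support_eq_zeroLocus]
    exact hp
  obtain ⟨Q, hQ⟩ := associatedPrimes.nonempty Rp Mp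
  have := hQ.isPrime
  have hQmin : Q ∈ minimalPrimes Rp := by
    have hcomap : Q.comap (algebraMap R Rp) ∈ associatedPrimes R M := by
      rwa [← Set.mem_preimage (f := Ideal.comap (algebraMap R Rp)),
        Module.associatedPrimes.preimage_comap_associatedPrimes_eq_associatedPrimes_of_isLocalizedModule
        p.primeCompl Rp (LocalizedModule.mkLinearMap p.primeCompl M)]
    have hmin := mem_minimalPrimes_of_mem_associatedPrimes_of_torsionFree hS1 htf hcomap
    refine ⟨⟨inferInstance, bot_le⟩, fun P hP hPQ ↦ ?_⟩
    have := hP.1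
    rw [← IsLocalization.map_under p.primeCompl Rp Q, Ideal.map_le_iff_le_comap]
    exact hmin.2 ⟨inferInstance, bot_le⟩ (Ideal.comap_mono hPQ)
  refine le_antisymm (ringKrullDim_quotient_le _) ?_
  rw [← (hqu p).ringKrullDim_quotient_eq hQmin]
  have hann : Module.annihilator Rp Mp ≤ Q :=
    Submodule.annihilator_top.symm.trans_le (IsAssociatedPrime.annihilator_le hQ)
  exact ringKrullDim_le_of_surjective (Ideal.Quotient.factor hann)
    (Ideal.Quotient.factor_surjective hann)
end

section
/- Let $R$ be a locally quasi-unmixed Noetherian ring. Then $\widetilde{R}\subseteq\overline{R}$, where $\overline{R}$ is the integral closure of $R$ in its total quotient ring. -/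
section

open IsLocalRing Polynomial

theorem Polynomial.exists_isDistinguishedAt_mul_of_map_residue_ne_zero {D : Type*} [CommRing D]
    [IsLocalRing D] [IsAdicComplete (maximalIdeal D) D] {F : D[X]}
    (hF : F.map (residue D) ≠ 0) :
    ∃ H U : D[X], F = H * U ∧ H.IsDistinguishedAt (maximalIdeal D) ∧ IsUnit (U.coeff 0) := by
  have hF' : (F : PowerSeries D).map (residue D) ≠ 0 := by
    contrapose! hF
    ext n
    simpa using congr(PowerSeries.coeff n $hF)
  obtain ⟨H, h, hH, hu, hmul⟩ := PowerSeries.exists_isWeierstrassFactorization hF'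
  have hmon := hH.monic
  have hdeg : ((F %ₘ H).degree : WithBot ℕ) <
      (((H : PowerSeries D).map (Ideal.Quotient.mk (maximalIdeal D))).order.toNat : ℕ) := by
    have : H.natDegree = _ := congr(ENat.toNat $(hH.coe_natDegree_eq_order_map H 1
      (by simp) (by simp)))
    rw [← this, ← degree_eq_natDegree hmon.ne_zero]
    exact degree_modByMonic_lt _ hmon
  obtain ⟨hq, -⟩ := PowerSeries.IsWeierstrassDivisorAt.eq_of_mul_add_eq_mul_add
    hH.isWeierstrassDivisorAt' (q := h) (q' := ((F /ₘ H : D[X]) : PowerSeries D))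
    (r := 0) (r' := F %ₘ H) (by simp) hdeg (by
      rw [← coe_mul, ← coe_add, add_comm (H * _), modByMonic_add_div, hmul]; simp)
  refine ⟨H, F /ₘ H, ?_, hH, ?_⟩
  · rw [hq] at hmul
    exact_mod_cast hmul
  · rw [hq] at hu
    simpa using PowerSeries.isUnit_constantCoeff _ hu

theorem Ideal.eq_bot_of_lt_of_height_le_one {E : Type*} [CommRing E] [IsDomain E]
    {P Q : Ideal E} [P.IsPrime] [Q.IsPrime] (hP : P.height ≤ 1) (h : Q < P) : Q = ⊥ := by
  have h1 := Ideal.height_le_iff (p := P) (n := 1) |>.mp (by simpa using hP) Q ‹_› h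
  exact Ideal.height_eq_zero_iff_eq_bot.mp (by simpa using h1)

theorem IsLocalRing.exists_isPrime_lt_maximalIdeal {D : Type*} [CommRing D] [IsDomain D]
    [IsLocalRing D] (hd : 2 ≤ ringKrullDim D) :
    ∃ p : Ideal D, p.IsPrime ∧ p ≠ ⊥ ∧ p < maximalIdeal D := by
  by_contra! H
  have : (maximalIdeal D).height ≤ (1 : ℕ) := by
    rw [Ideal.height_le_iff]
    intro q hq hlt
    have : q = ⊥ := by
      by_contra h
      exact H q hq h hlt
    simp [this]
  rw [← maximalIdeal_height_eq_ringKrullDim] at hd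
  have := hd.trans (WithBot.coe_le_coe.mpr this)
  revert this; decide

theorem Polynomial.aeval_sub_algebraMap_coeff_zero_mem {D E : Type*} [CommRing D] [CommRing E]
    [Algebra D E] {g : E} {I : Ideal E} (hg : g ∈ I) (F : D[X]) :
    aeval g F - algebraMap D E (F.coeff 0) ∈ I := by
  nth_rw 1 [← F.divX_mul_X_add]
  simpa using I.mul_mem_left _ hg

theorem not_minimalPrimes_of_isAdicComplete {D E : Type*} [CommRing D] [IsDomain D] [IsLocalRing D]
    [IsAdicComplete (maximalIdeal D) D] [CommRing E] [IsDomain E] [IsNoetherianRing E]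
    [Algebra D E] (hinj : Function.Injective (algebraMap D E)) (hd : 2 ≤ ringKrullDim D) {g : E}
    (hg : Function.Surjective (aeval g : D[X] →ₐ[D] E)) {P : Ideal E}
    (hP : P ∈ (Ideal.span {g}).minimalPrimes) :
    ¬ (maximalIdeal D).map (algebraMap D E) ≤ P := by
  intro hm
  have hPp : P.IsPrime := hP.1.1
  have hgP : g ∈ P := hP.1.2 (Ideal.mem_span_singleton_self g)
  have hht : P.height ≤ 1 := Ideal.height_le_one_of_isPrincipal_of_mem_minimalPrimes _ P hP
  have hcomap : P.comap (algebraMap D E) = maximalIdeal D :=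
    ((maximalIdeal.isMaximal D).eq_of_le (Ideal.IsPrime.ne_top inferInstance)
      (Ideal.map_le_iff_le_comap.mp hm)).symm
  obtain ⟨p, hp, hp0, hpm⟩ := exists_isPrime_lt_maximalIdeal hd
  by_cases hker : RingHom.ker (aeval g : D[X] →ₐ[D] E) ≤ (maximalIdeal D).map (C : D →+* D[X])
  · have hprime : ((maximalIdeal D).map (C : D →+* D[X])).IsPrime :=
      Ideal.isPrime_map_C_of_isPrime
    let φ : D[X] →+* E := (aeval g : D[X] →ₐ[D] E)
    have hφ : Function.Surjective φ := hg
    let Q := ((maximalIdeal D).map (C : D →+* D[X])).map φ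
    have hQ : Q.IsPrime := Ideal.map_isPrime_of_surjective hφ hker
    have hQm : Q = (maximalIdeal D).map (algebraMap D E) := by
      have hφC : φ.comp C = algebraMap D E := by
        ext
        simp [φ]
      rw [← hφC, ← Ideal.map_map]
    have hgQ : g ∉ Q := by
      intro h
      obtain ⟨y, hy, hyg⟩ := (Ideal.mem_map_iff_of_surjective φ hφ).mp h
      have hX : (X : D[X]) ∈ (maximalIdeal D).map (C : D →+* D[X]) := by
        rw [← sub_add_cancel X y]
        refine add_mem (hker ?_) hy
        rw [RingHom.mem_ker, map_sub, aeval_X, sub_eq_zero]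
        exact hyg.symm
      exact (Ideal.ne_top_iff_one _).mp (maximalIdeal.isMaximal D).ne_top
        (by simpa using Ideal.mem_map_C_iff.mp hX 1)
    have hQ0 : Q = ⊥ := Ideal.eq_bot_of_lt_of_height_le_one hht
      (lt_of_le_of_ne (hQm ▸ hm) fun h => hgQ (h ▸ hgP))
    have : maximalIdeal D = ⊥ := by
      rw [hQm] at hQ0
      exact (Ideal.map_eq_bot_iff_of_injective hinj).mp hQ0
    exact hp0 (le_bot_iff.mp (this ▸ hpm.le))
  · obtain ⟨F, hF, hFm⟩ := SetLike.not_le_iff_exists.mp hker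
    have hF' : F.map (residue D) ≠ 0 := by
      contrapose! hFm
      rw [Ideal.mem_map_C_iff]
      intro n
      rw [← residue_eq_zero_iff, ← coeff_map, hFm, coeff_zero]
    obtain ⟨H, U, rfl, hH, hU⟩ := exists_isDistinguishedAt_mul_of_map_residue_ne_zero hF'
    rw [RingHom.mem_ker, map_mul, mul_eq_zero] at hF
    rcases hF with hF | hF
    · have hint : IsIntegral D g := ⟨H, hH.monic, hF⟩
      have : Algebra.IsIntegral D E := by
        refine ⟨fun e => ?_⟩
        obtain ⟨F, rfl⟩ := hg e
        exact IsIntegral.of_mem_of_fg _ hint.fg_adjoin_singleton _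
          (aeval_mem_adjoin_singleton D g)
      have hgpow : g ^ H.natDegree ∈ (maximalIdeal D).map (algebraMap D E) :=
        hH.toIsWeaklyEisensteinAt.pow_natDegree_le_of_aeval_zero_of_monic_mem_map hF hH.monic _
          natDegree_map_le
      obtain ⟨Q, hpQ, hQ, hQp⟩ := Ideal.exists_ideal_over_prime_of_isIntegral p (⊥ : Ideal E) (by
        rw [← RingHom.ker_eq_comap_bot, (RingHom.injective_iff_ker_eq_bot _).mp hinj]
        exact bot_le)
      obtain ⟨M, hM, hQM⟩ := Q.exists_le_maximal hQ.ne_top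
      have hMm : M.comap (algebraMap D E) = maximalIdeal D :=
        IsLocalRing.eq_maximalIdeal (Ideal.isMaximal_comap_of_isIntegral_of_isMaximal M)
      have hgM : g ∈ M :=
        hM.isPrime.mem_of_pow_mem _ (Ideal.map_le_iff_le_comap.mpr hMm.ge hgpow)
      have hPM : P ≤ M := by
        intro e he
        obtain ⟨F, rfl⟩ := hg e
        have h1 := (P.sub_mem_iff_right he).mp (aeval_sub_algebraMap_coeff_zero_mem hgP F)
        rw [← Ideal.mem_comap, hcomap, ← hMm, Ideal.mem_comap] at h1
        exact (M.sub_mem_iff_left h1).mp (aeval_sub_algebraMap_coeff_zero_mem hgM F)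
      have hPmax : P.IsMaximal := Ideal.isMaximal_of_isIntegral_of_isMaximal_comap P
        (hcomap ▸ maximalIdeal.isMaximal D)
      rw [← hPmax.eq_of_le hM.ne_top hPM] at hQM
      have : Q = ⊥ := Ideal.eq_bot_of_lt_of_height_le_one hht
        (lt_of_le_of_ne hQM fun h => hpm.ne (by rw [← hQp, h, hcomap]))
      rw [this, ← RingHom.ker_eq_comap_bot, (RingHom.injective_iff_ker_eq_bot _).mp hinj] at hQp
      exact hp0 hQp.symm
    · have : aeval g U - algebraMap D E (U.coeff 0) ∈ P :=
        aeval_sub_algebraMap_coeff_zero_mem hgP U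
      rw [hF, zero_sub, neg_mem_iff] at this
      exact hPp.ne_top (Ideal.eq_top_of_isUnit_mem _ this (hU.map _))

theorem IsLocalRing.isIntegral_of_forall_isIntegral_smul {D K : Type*} [CommRing D] [IsDomain D]
    [IsNoetherianRing D] [IsLocalRing D] [IsAdicComplete (maximalIdeal D) D]
    (hd : 2 ≤ ringKrullDim D) [Field K] [Algebra D K]
    (hinj : Function.Injective (algebraMap D K)) {f : K}
    (hf : ∀ x ∈ maximalIdeal D, IsIntegral D (x • f)) : IsIntegral D f := by
  by_contra hn
  have hf0 : f ≠ 0 := by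
    rintro rfl
    exact hn isIntegral_zero
  have key (F : D[X]) (hF : aeval f⁻¹ F = f) : False := by
    refine hn ⟨X ^ (F.natDegree + 1) - F.reverse, ?_, ?_⟩
    · exact monic_X_pow_sub (degree_le_natDegree.trans_lt
        (Nat.cast_lt.mpr (Nat.lt_succ_of_le F.reverse_natDegree_le)))
    · let _ : Invertible f⁻¹ := invertibleOfNonzero (inv_ne_zero hf0)
      have := eval₂_reverse_mul_pow (algebraMap D K) f⁻¹ F
      rw [← aeval_def f⁻¹, hF, invOf_eq_inv, inv_inv, inv_pow, mul_inv_eq_iff_eq_mul₀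
        (pow_ne_zero _ hf0)] at this
      rw [eval₂_sub, eval₂_X_pow, this, pow_succ', sub_self]
  let E := Algebra.adjoin D {f⁻¹}
  let g : E := ⟨f⁻¹, Algebra.self_mem_adjoin_singleton D _⟩
  have hg : Function.Surjective (aeval g : D[X] →ₐ[D] E) := by
    rintro ⟨e, he⟩
    have he' := he
    rw [show E = _ from Algebra.adjoin_singleton_eq_range_aeval D _] at he'
    obtain ⟨F, rfl⟩ := he'
    exact ⟨F, Subtype.ext (by simp [g])⟩
  have hE : IsNoetherianRing E :=
    isNoetherianRing_of_surjective _ _ (aeval g : D[X] →ₐ[D] E).toRingHom hg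
  have htop : Ideal.span {g} ≠ ⊤ := by
    rw [Ne, Ideal.eq_top_iff_one, Ideal.mem_span_singleton]
    rintro ⟨e, he⟩
    obtain ⟨F, rfl⟩ := hg e
    refine key F ?_
    have := congr((($he : E) : K))
    rw [OneMemClass.coe_one, MulMemClass.coe_mul, ← E.coe_val, ← aeval_algHom_apply,
      eq_comm] at this
    exact ((inv_mul_eq_one₀ hf0).mp this).symm
  obtain ⟨P, hP⟩ := Ideal.nonempty_minimalPrimes htop
  refine not_minimalPrimes_of_isAdicComplete (D := D) (E := E) ?_ hd hg hP ?_
  · refine Function.Injective.of_comp (f := algebraMap E K) ?_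
    rwa [← RingHom.coe_comp, ← IsScalarTower.algebraMap_eq]
  · have hPp : P.IsPrime := hP.1.1
    rw [Ideal.map_le_iff_le_comap]
    intro x hx
    obtain ⟨p, hp, hpx⟩ := hf x hx
    refine hPp.mem_of_pow_mem p.natDegree (hP.1.2 ?_)
    rw [Ideal.mem_span_singleton]
    have hsum := hpx
    rw [eval₂_eq_sum_range, Finset.sum_range_succ, hp.coeff_natDegree] at hsum
    refine ⟨-∑ i ∈ Finset.range p.natDegree, algebraMap D E (p.coeff i * x ^ i) *
      g ^ (p.natDegree - 1 - i), Subtype.ext ?_⟩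
    have hcoe (a : D) : ((algebraMap D E a : E) : K) = algebraMap D K a := rfl
    simp only [hcoe, MulMemClass.coe_mul, SubmonoidClass.coe_pow, NegMemClass.coe_neg,
      AddSubmonoidClass.coe_finsetSum, g, map_mul, map_pow]
    rw [add_comm, map_one, one_mul, add_eq_zero_iff_eq_neg, Algebra.smul_def, mul_pow] at hsum
    refine mul_right_cancel₀ (pow_ne_zero p.natDegree hf0) (hsum.trans ?_)
    rw [mul_neg, neg_mul, Finset.mul_sum, Finset.sum_mul]
    refine congrArg _ (Finset.sum_congr rfl fun i hi => ?_)
    obtain ⟨k, hk⟩ := Nat.exists_eq_add_of_lt (Finset.mem_range.mp hi)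
    rw [hk, show i + k + 1 - 1 - i = k by lia, inv_pow]
    field_simp
    ring

open MvPowerSeries in
theorem isNoetherianRing_of_isAdicComplete {A S : Type*} [CommRing A] [IsNoetherianRing A]
    [CommRing S] [Algebra A S] (J : Ideal S) [IsAdicComplete J S] (hJ : J.FG)
    (h : Function.Surjective ((Ideal.Quotient.mk J).comp (algebraMap A S))) :
    IsNoetherianRing S := by
  obtain ⟨k, a, ha⟩ := Submodule.fg_iff_exists_fin_generating_family.mp hJ
  have hmap : ((MvPolynomial.idealOfVars (Fin k) A).map
      (MvPolynomial.aeval a : _ →ₐ[A] S).toRingHom) = J := by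
    rw [MvPolynomial.idealOfVars, Ideal.map_span, ← Set.range_comp, ← ha]
    congr 2
    ext
    simp
  have hmem (n : ℕ) {p : MvPolynomial (Fin k) A} (hp : p ∈ MvPolynomial.idealOfVars (Fin k) A ^ n) :
      MvPolynomial.aeval a p ∈ J ^ n := by
    rw [← hmap, ← Ideal.map_pow]
    exact Ideal.mem_map_of_mem _ hp
  let f (n : ℕ) : MvPowerSeries (Fin k) A →+* S ⧸ J ^ n :=
    (Ideal.Quotient.lift (MvPolynomial.idealOfVars (Fin k) A ^ n)
      ((Ideal.Quotient.mk (J ^ n)).comp (MvPolynomial.aeval a : _ →ₐ[A] S).toRingHom)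
      fun p hp => Ideal.Quotient.eq_zero_iff_mem.mpr (hmem n hp)).comp
      (truncTotalAlgHom (Fin k) A n).toRingHom
  have hf {m n : ℕ} (hle : m ≤ n) :
      (Ideal.Quotient.factorPow J hle).comp (f n) = f m := by
    ext p
    have := hmem m (truncTotal_sub_truncTotal_mem_pow_idealOfVars hle le_rfl p)
    rw [map_sub] at this
    exact Ideal.Quotient.eq.mpr this
  let F := IsAdicComplete.liftRingHom J f hf
  have hF (p : MvPolynomial (Fin k) A) : F p = MvPolynomial.aeval a p := by
    rw [← sub_eq_zero]
    refine IsHausdorff.haus' (I := J) _ fun n => ?_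
    rw [SModEq.zero, smul_eq_mul, Ideal.mul_top]
    refine Ideal.pow_le_pow_right (Nat.le_add_right n (p.totalDegree + 1)) ?_
    rw [← Ideal.Quotient.eq]
    refine (IsAdicComplete.mk_liftRingHom J f hf _ _).trans ?_
    change Ideal.Quotient.mk _
      (MvPolynomial.aeval a (truncTotal _ (p : MvPowerSeries (Fin k) A))) = _
    rw [(truncTotal_coe_eq_self_iff p (by lia)).mpr (by lia)]
  have hI : (Ideal.span (Set.range X)).map F = J := by
    rw [Ideal.map_span, ← Set.range_comp, ← ha]
    congr 2
    ext i
    simpa using hF (MvPolynomial.X i)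
  have : IsHausdorff ((Ideal.span (Set.range X)).map F) S := by
    rw [hI]
    infer_instance
  refine isNoetherianRing_of_surjective _ _ F
    (surjective_of_mk_map_comp_surjective (I := Ideal.span (Set.range X)) F ?_)
  rw [← hI] at h
  intro y
  obtain ⟨r, rfl⟩ := h y
  exact ⟨C r, by simpa using congr(Ideal.Quotient.mk (Ideal.map F _) $(hF (MvPolynomial.C r)))⟩

instance AdicCompletion.isNoetherianRing_maximalIdeal {A : Type*} [CommRing A]
    [IsNoetherianRing A] [IsLocalRing A] :
    IsNoetherianRing (AdicCompletion (maximalIdeal A) A) := by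
  refine isNoetherianRing_of_isAdicComplete (A := A) (maximalIdeal _) ?_ ?_
  · rw [AdicCompletion.maximalIdeal_eq_map]
    exact (maximalIdeal A).fg_of_isNoetherianRing.map _
  · intro y
    obtain ⟨r, hr⟩ := (AdicCompletion.residueField_map_bijective A).2 y
    obtain ⟨a, rfl⟩ := residue_surjective r
    exact ⟨a, hr⟩

theorem IsPrecomplete.of_surjective {A M N : Type*} [CommRing A] (I : Ideal A) [AddCommGroup M]
    [Module A M] [AddCommGroup N] [Module A N] [IsPrecomplete I M] {f : M →ₗ[A] N}
    (hf : Function.Surjective f) : IsPrecomplete I N := by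
  rw [← AdicCompletion.of_surjective_iff]
  intro y
  obtain ⟨x, rfl⟩ := AdicCompletion.map_surjective I hf y
  obtain ⟨x, rfl⟩ := AdicCompletion.of_surjective I M x
  exact ⟨f x, (AdicCompletion.map_of I f x).symm⟩

theorem IsLocalRing.isAdicComplete_quotient {B : Type*} [CommRing B] [IsNoetherianRing B]
    [IsLocalRing B] [IsAdicComplete (maximalIdeal B) B] (q : Ideal B) [IsLocalRing (B ⧸ q)] :
    IsAdicComplete (maximalIdeal (B ⧸ q)) (B ⧸ q) where
  haus' := IsHausdorff.haus inferInstance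
  toIsPrecomplete := by
    have := IsPrecomplete.of_surjective (maximalIdeal B) (f := (Algebra.linearMap B (B ⧸ q)))
      Ideal.Quotient.mk_surjective
    rwa [← IsPrecomplete.map_algebraMap_iff (S := B ⧸ q), Ideal.Quotient.algebraMap_eq,
      IsLocalRing.map_maximalIdeal_of_surjective _ Ideal.Quotient.mk_surjective] at this

/-- An element of the total ring of fractions is integral as soon as it is integral modulo every
minimal prime. -/
theorem isIntegral_mk'_of_forall_minimalPrimes {B T : Type*} [CommRing B] [IsNoetherianRing B]
    [CommRing T] [Algebra B T] [IsLocalization (nonZeroDivisors B) T] {a : B}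
    {b : nonZeroDivisors B}
    (h : ∀ (q : Ideal B) [q.IsPrime], q ∈ minimalPrimes B → IsIntegral (B ⧸ q)
      (algebraMap B (FractionRing (B ⧸ q)) a / algebraMap B (FractionRing (B ⧸ q)) b)) :
    IsIntegral B (IsLocalization.mk' T a b) := by
  have key (q : Ideal B) (hq : q ∈ minimalPrimes B) : ∃ F : B[X], F.Monic ∧
      ∃ c ∈ q, ∃ s : nonZeroDivisors B,
        aeval (IsLocalization.mk' T a b) F = IsLocalization.mk' T c s := by
    have hqp : q.IsPrime := hq.1.1
    let L := FractionRing (B ⧸ q)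
    have hker (x : B) : algebraMap B L x = 0 ↔ x ∈ q := by
      rw [IsScalarTower.algebraMap_apply B (B ⧸ q) L, FaithfulSMul.algebraMap_eq_zero_iff]
      exact Ideal.Quotient.eq_zero_iff_mem
    have hunit (s : nonZeroDivisors B) : IsUnit (algebraMap B L s) := by
      rw [isUnit_iff_ne_zero, Ne, hker]
      exact fun hs => (Ideal.disjoint_nonZeroDivisors_of_mem_minimalPrimes hq).le_bot ⟨hs, s.2⟩
    let σ : T →+* L := IsLocalization.lift hunit
    obtain ⟨F, hF, hF0⟩ := h q hq
    obtain ⟨G, rfl, -, hG⟩ := lifts_and_natDegree_eq_and_monic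
      (Polynomial.map_surjective _ Ideal.Quotient.mk_surjective F) hF
    refine ⟨G, hG, ?_⟩
    obtain ⟨c, s, hcs⟩ := IsLocalization.exists_mk'_eq (nonZeroDivisors B)
      (aeval (IsLocalization.mk' T a b) G)
    refine ⟨c, ?_, s, hcs.symm⟩
    have hσf : σ (IsLocalization.mk' T a b) = algebraMap B L a / algebraMap B L b := by
      rw [eq_div_iff (hunit b).ne_zero, ← IsLocalization.lift_eq (S := T) hunit (b : B), ← map_mul,
        IsLocalization.mk'_spec, IsLocalization.lift_eq]
    have hσ : σ.comp (algebraMap B T) = algebraMap B L := IsLocalization.lift_comp hunit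
    rw [eval₂_map, ← hσf] at hF0
    rw [← hker, ← hσ, RingHom.comp_apply, ← IsLocalization.mk'_spec T c s, hcs, map_mul, aeval_def,
      hom_eval₂, hσ]
    exact mul_eq_zero_of_left hF0 _
  choose! F hF c hc s hs using key
  let S := (minimalPrimes.finite_of_isNoetherianRing B).toFinset
  let G := ∏ q ∈ S, F q
  have hnil : IsNilpotent (aeval (IsLocalization.mk' T a b) G) := by
    have hG : aeval (IsLocalization.mk' T a b) G = algebraMap B T (∏ q ∈ S, c q) *
        ∏ q ∈ S, IsLocalization.mk' T 1 (s q) := by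
      rw [map_prod, map_prod, ← Finset.prod_mul_distrib]
      refine Finset.prod_congr rfl fun q hq => ?_
      rw [hs q (by simpa [S] using hq), IsLocalization.mk'_eq_mul_mk'_one]
    rw [hG]
    refine (Commute.all _ _).isNilpotent_mul_right (IsNilpotent.map ?_ _)
    rw [nilpotent_iff_mem_prime]
    intro J hJ
    obtain ⟨q, hq, hqJ⟩ := Ideal.exists_minimalPrimes_le (bot_le (a := J))
    exact hqJ (q.mem_of_dvd (Finset.dvd_prod_of_mem c (by simpa [S] using hq)) (hc q hq))
  obtain ⟨n, hn⟩ := hnil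
  exact ⟨G ^ n, (monic_prod_of_monic _ _ fun q hq => hF q (by simpa [S] using hq)).pow n, by
    rwa [← map_pow, aeval_def] at hn⟩

theorem exists_pow_mem_span_of_isIntegral_mk' {B T : Type*} [CommRing B] [CommRing T] [Algebra B T]
    [IsLocalization (nonZeroDivisors B) T] {a : B} {b : nonZeroDivisors B}
    (h : IsIntegral B (IsLocalization.mk' T a b)) :
    ∃ n : ℕ, a ^ n ∈ Ideal.span ((fun i => a ^ i * (b : B) ^ (n - i)) '' (Finset.range n)) := by
  obtain ⟨F, hF, hF0⟩ := h
  rw [eval₂_eq_sum_range, Finset.sum_range_succ, hF.coeff_natDegree, add_comm, map_one, one_mul,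
    add_eq_zero_iff_eq_neg] at hF0
  refine ⟨F.natDegree, ?_⟩
  have hab : algebraMap B T a = IsLocalization.mk' T a b * algebraMap B T b :=
    (IsLocalization.mk'_spec T a b).symm
  have : a ^ F.natDegree =
      -∑ i ∈ Finset.range F.natDegree, F.coeff i * (a ^ i * (b : B) ^ (F.natDegree - i)) := by
    apply IsLocalization.injective T le_rfl
    simp only [map_neg, map_sum, map_mul, map_pow]
    rw [hab, mul_pow, hF0, neg_mul, Finset.sum_mul]
    refine congrArg _ (Finset.sum_congr rfl fun i hi => ?_)
    rw [← Nat.add_sub_of_le (Finset.mem_range.mp hi).le, Nat.add_sub_cancel_left]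
    ring
  rw [this]
  exact neg_mem (sum_mem fun i hi =>
    Ideal.mul_mem_left _ _ (Ideal.subset_span (Set.mem_image_of_mem _ hi)))

theorem isIntegral_smul_mk'_of_mul_pow_mem_span {B T : Type*} [CommRing B] [CommRing T]
    [Algebra B T] {M : Submonoid B} [IsLocalization M T] {a : B} {b : M}
    {n : ℕ} {s : B}
    (h : s * a ^ n ∈ Ideal.span ((fun i => a ^ i * (b : B) ^ (n - i)) '' (Finset.range n))) :
    IsIntegral B (s • IsLocalization.mk' T a b) := by
  obtain rfl | hs := eq_or_ne s 0
  · rw [zero_smul]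
    exact isIntegral_zero
  obtain ⟨c, hc⟩ := (Submodule.mem_span_image_finset_iff_exists_fun B).mp h
  let r : B[X] := ∑ i, C (c i) * X ^ (i : ℕ)
  have hr : r.degree < (C s * X ^ n).degree := by
    rw [degree_C_mul_X_pow _ hs, ← mem_degreeLT]
    exact sum_mem fun i _ => mem_degreeLT.mpr <|
      (degree_C_mul_X_pow_le _ _).trans_lt (Nat.cast_lt.mpr (Finset.mem_range.mp i.2))
  have hlead : (C s * X ^ n - r).leadingCoeff = s := by
    rw [leadingCoeff_sub_of_degree_lt hr, leadingCoeff_C_mul_X_pow]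
  nth_rw 1 [← hlead]
  refine isIntegral_leadingCoeff_smul _ _ ?_
  have hab : algebraMap B T a = IsLocalization.mk' T a b * algebraMap B T b :=
    (IsLocalization.mk'_spec T a b).symm
  refine ((IsLocalization.map_units T b).pow n).mul_left_eq_zero.mp ?_
  have := congr(algebraMap B T $hc)
  simp only [map_sum, smul_eq_mul, map_mul, map_pow, hab] at this
  simp only [r, map_sub, map_sum, map_mul, map_pow, aeval_C, aeval_X, sub_mul, Finset.sum_mul]
  rw [sub_eq_zero, mul_assoc, ← mul_pow, ← this]
  refine Finset.sum_congr rfl fun i _ => ?_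
  rw [← pow_sub_mul_pow (algebraMap B T b) (Finset.mem_range.mp i.2).le]
  ring

theorem Module.Flat.algebraMap_mem_nonZeroDivisors {R B : Type*} [CommRing R] [CommRing B]
    [Algebra R B] [Module.Flat R B] {r : R} (hr : r ∈ nonZeroDivisors R) :
    algebraMap R B r ∈ nonZeroDivisors B := by
  refine mem_nonZeroDivisors_iff_right.mpr fun x hx => ?_
  refine (Module.Flat.isSMulRegular_of_nonZeroDivisors (M := B) hr) ?_
  simpa [Algebra.smul_def, mul_comm] using hx

theorem IsLocalRing.isIntegral_mk'_of_forall_mem_isIntegral_smul {R B T T' : Type*} [CommRing R]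
    [CommRing B] [IsNoetherianRing B] [IsLocalRing B] [IsAdicComplete (maximalIdeal B) B]
    [Algebra R B] [Module.Flat R B] [CommRing T] [Algebra R T]
    [IsLocalization (nonZeroDivisors R) T] [CommRing T'] [Algebra B T']
    [IsLocalization (nonZeroDivisors B) T'] {p : Ideal R}
    (hp : p.map (algebraMap R B) = maximalIdeal B)
    (hdim : ∀ q ∈ minimalPrimes B, 2 ≤ ringKrullDim (B ⧸ q)) {a : R} {b : nonZeroDivisors R}
    (h : ∀ x ∈ p, IsIntegral R (x • IsLocalization.mk' T a b)) :
    IsIntegral B (IsLocalization.mk' T' (algebraMap R B a)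
      (⟨algebraMap R B b, Module.Flat.algebraMap_mem_nonZeroDivisors b.2⟩ :
        nonZeroDivisors B)) := by
  refine isIntegral_mk'_of_forall_minimalPrimes fun q hqp hq => ?_
  let D := B ⧸ q
  let L := FractionRing D
  have : IsLocalRing D := .of_surjective' (Ideal.Quotient.mk q) Ideal.Quotient.mk_surjective
  have := isAdicComplete_quotient q
  refine IsLocalRing.isIntegral_of_forall_isIntegral_smul (D := D) (hdim q hq)
    (FaithfulSMul.algebraMap_injective _ _) ?_
  have hunit (s : nonZeroDivisors R) : IsUnit ((algebraMap B L).comp (algebraMap R B) s) := by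
    rw [isUnit_iff_ne_zero, RingHom.comp_apply, IsScalarTower.algebraMap_apply B D L, Ne,
      FaithfulSMul.algebraMap_eq_zero_iff, Ideal.Quotient.algebraMap_eq,
      Ideal.Quotient.eq_zero_iff_mem]
    exact fun hs => (Ideal.disjoint_nonZeroDivisors_of_mem_minimalPrimes hq).le_bot
      ⟨hs, Module.Flat.algebraMap_mem_nonZeroDivisors s.2⟩
  let σ : T →+* L := IsLocalization.lift hunit
  have hσ (r : R) : σ (algebraMap R T r) = algebraMap B L (algebraMap R B r) :=
    IsLocalization.lift_eq hunit r
  have hσf : σ (IsLocalization.mk' T a b) =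
      algebraMap B L (algebraMap R B a) / algebraMap B L (algebraMap R B b) := by
    refine eq_div_of_mul_eq (hunit b).ne_zero ?_
    rw [← hσ, ← hσ, ← map_mul, IsLocalization.mk'_spec]
  let N : Ideal D := (integralClosure D L).toSubmodule.comap
    (LinearMap.toSpanSingleton D L (σ (IsLocalization.mk' T a b)))
  have hN : maximalIdeal D ≤ N := by
    rw [← IsLocalRing.map_maximalIdeal_of_surjective _ Ideal.Quotient.mk_surjective, ← hp,
      Ideal.map_map, Ideal.map_le_iff_le_comap]
    intro x hx
    have h1 := IsIntegral.map_of_comp_eq ((Ideal.Quotient.mk q).comp (algebraMap R B)) σ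
      (by ext r; exact (hσ r).symm) (h x hx)
    rw [Algebra.smul_def, map_mul, hσ] at h1
    change IsIntegral D _
    rw [LinearMap.toSpanSingleton_apply, Algebra.smul_def]
    exact h1
  intro x hx
  rw [← hσf]
  exact hN hx

theorem ringKrullDim_le_ringKrullDim_adicCompletion (A : Type*) [CommRing A] [IsNoetherianRing A]
    [IsLocalRing A] : ringKrullDim A ≤ ringKrullDim (AdicCompletion (maximalIdeal A) A) := by
  have : (maximalIdeal (AdicCompletion (maximalIdeal A) A)).LiesOver (maximalIdeal A) :=
    ⟨(maximalIdeal_comap (algebraMap A (AdicCompletion (maximalIdeal A) A))).symm⟩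
  rw [← maximalIdeal_height_eq_ringKrullDim, ← maximalIdeal_height_eq_ringKrullDim,
    Ideal.height_eq_height_add_of_liesOver_of_hasGoingDown (maximalIdeal A)
      (maximalIdeal (AdicCompletion (maximalIdeal A) A))]
  exact WithBot.coe_le_coe.mpr le_self_add

theorem exists_isPrime_forall_mem_iff_isIntegral_smul {R T : Type*} [CommRing R]
    [IsNoetherianRing R] [CommRing T] [Algebra R T] {f : T} (hf : ¬ IsIntegral R f) :
    ∃ (p : Ideal R) (g : T), p.IsPrime ∧ (∀ x, IsIntegral R (x • f) → x ∈ p) ∧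
      ∀ x, x ∈ p ↔ IsIntegral R (x • g) := by
  let N := (integralClosure R T).toSubmodule
  have hN (x : R) (t : T) :
      x ∈ (⊥ : Submodule R (T ⧸ N)).colon {N.mkQ t} ↔ IsIntegral R (x • t) := by
    rw [Submodule.mem_colon_singleton, Submodule.mem_bot, ← map_smul, Submodule.mkQ_apply,
      Submodule.Quotient.mk_eq_zero]
    rfl
  obtain ⟨p, hp, hfp⟩ := exists_le_isAssociatedPrime_of_isNoetherianRing R (N.mkQ f) (by
    rwa [Ne, Submodule.mkQ_apply, Submodule.Quotient.mk_eq_zero])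
  obtain ⟨hp, y, rfl⟩ := isAssociatedPrime_iff.mp hp
  obtain ⟨g, rfl⟩ := N.mkQ_surjective y
  exact ⟨_, g, hp, fun x hx => hfp ((hN x f).mpr hx), fun x => hN x g⟩

theorem isIntegral_of_forall_mem_isIntegral_smul {R T : Type*} [CommRing R]
    [IsNoetherianRing R] [CommRing T] [Algebra R T] [IsLocalization (nonZeroDivisors R) T]
    (p : Ideal R) [p.IsPrime]
    (hdim : ∀ q ∈ minimalPrimes (AdicCompletion (maximalIdeal (Localization.AtPrime p))
      (Localization.AtPrime p)), 2 ≤ ringKrullDim (_ ⧸ q)) {f : T}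
    (h : ∀ x ∈ p, IsIntegral R (x • f)) : ∃ s ∉ p, IsIntegral R (s • f) := by
  obtain ⟨a, b, rfl⟩ := IsLocalization.exists_mk'_eq (nonZeroDivisors R) f
  let A := Localization.AtPrime p
  let B := AdicCompletion (maximalIdeal A) A
  have : Module.Flat R A := IsLocalization.flat A p.primeCompl
  have : Module.Flat R B := Module.Flat.trans R A B
  have : Module.FaithfullyFlat A B := Module.FaithfullyFlat.of_flat_of_isLocalHom
  have hp : p.map (algebraMap R B) = maximalIdeal B := by
    rw [IsScalarTower.algebraMap_eq R A B, ← Ideal.map_map,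
      Localization.AtPrime.map_eq_maximalIdeal]
    exact (AdicCompletion.maximalIdeal_eq_map (R := A)).symm
  obtain ⟨n, hn⟩ := exists_pow_mem_span_of_isIntegral_mk' (T := FractionRing B) <|
    isIntegral_mk'_of_forall_mem_isIntegral_smul hp hdim h
  let J := Ideal.span ((fun i => a ^ i * (b : R) ^ (n - i)) '' (Finset.range n))
  have hJ : algebraMap R B (a ^ n) ∈ J.map (algebraMap R B) := by
    simpa [J, Ideal.map_span, Set.image_image] using hn
  have hJA : algebraMap R A (a ^ n) ∈ J.map (algebraMap R A) := by
    rw [← Ideal.comap_map_eq_self_of_faithfullyFlat (B := B) (J.map (algebraMap R A)),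
      Ideal.map_map, ← IsScalarTower.algebraMap_eq, Ideal.mem_comap,
      ← IsScalarTower.algebraMap_apply]
    exact hJ
  obtain ⟨s, hs, hsJ⟩ :=
    (IsLocalization.algebraMap_mem_map_algebraMap_iff p.primeCompl A _ _).mp hJA
  exact ⟨s, hs, isIntegral_smul_mk'_of_mul_pow_mem_span hsJ⟩

end

/-- if `R` is a locally quasi-unmixed Noetherian ring, then
`R̃ ⊆ R̄`, the integral closure of `R` in its total quotient ring. -/
theorem stmt14 {R : Type*} [CommRing R] [IsNoetherianRing R]
    (hqu : LocallyQuasiUnmixed R) :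
    {f : FractionRing R | ∃ I : Ideal R, 2 ≤ idealHt I ∧
        ∀ i ∈ I, i • f ∈ Set.range (algebraMap R (FractionRing R))} ⊆
      {f | IsIntegral R f} := by
  rintro f ⟨I, hI, hIf⟩
  by_contra hf
  obtain ⟨p, g, hp, hfp, hg⟩ := exists_isPrime_forall_mem_iff_isIntegral_smul hf
  have hIp : I ≤ p := fun i hi => hfp i <| by
    obtain ⟨r, hr⟩ := hIf i hi
    exact hr ▸ isIntegral_algebraMap
  have hht : 2 ≤ p.height := by
    refine hI.trans ((iInf₂_le (⟨p, hp⟩ : PrimeSpectrum R) hIp).trans_eq ?_)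
    exact (PrimeSpectrum.height_eq_orderHeight ⟨p, hp⟩).symm
  obtain ⟨s, hs, hsg⟩ := isIntegral_of_forall_mem_isIntegral_smul p (fun q hq => by
    rw [hqu p q hq]
    refine le_trans ?_ (ringKrullDim_le_ringKrullDim_adicCompletion _)
    rw [IsLocalization.AtPrime.ringKrullDim_eq_height p (Localization.AtPrime p)]
    exact WithBot.coe_le_coe.mpr hht) fun x hx => (hg x).mp hx
  exact hs ((hg s).mpr hsg)
end

section
/- Let $R$ be a Noetherian local ring of dimension 2 in which all minimal primes have the same codimension, possessing a canonical module, and suppose $\overline{R}$ is a finitely generated $R$-module. Let $a,b$ be non-zerodivisors in the maximal ideal such that $a\in R:\overline{R}$, the pair $a,b$ is a system of parameters, and $aR:_R b=aR:_R b^2$. Then $\mathrm{U}(aR)=aR:_R b$ and hence $\widetilde{R}=\frac{R}{a}\cap\frac{R}{b}$. -/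
open Pointwise RingTheory.Sequence

/-- A Gorenstein local ring: a Noetherian local ring admitting a system of
parameters (a list of non-units of length `dim`) which is a regular sequence
generating an irreducible ideal. -/
def GorensteinLocalRing (S : Type*) [CommRing S] : Prop :=
  IsNoetherianRing S ∧ IsLocalRing S ∧
    ∃ l : List S, (∀ x ∈ l, ¬ IsUnit x) ∧
      (l.length : WithBot ℕ∞) = ringKrullDim S ∧ IsWeaklyRegular S l ∧
      ∀ I J : Ideal S, I ⊓ J = Ideal.ofList l →
        I = Ideal.ofList l ∨ J = Ideal.ofList l

section Depth

variable {S : Type*} [CommRing S]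

/-- `x` is a non-zerodivisor modulo the ideal `I`. -/
def RegularMod (I : Ideal S) (x : S) : Prop := ∀ u, x * u ∈ I → u ∈ I

/-- The depth of `S ⧸ I`, for a local ring `S`, is at least `n`. -/
def DepthAtLeast [IsLocalRing S] : ℕ → Ideal S → Prop
  | 0, I => I ≠ ⊤
  | n + 1, I => ∃ x ∈ IsLocalRing.maximalIdeal S,
      RegularMod I x ∧ DepthAtLeast n (I ⊔ Ideal.span {x})

theorem mem_sup_span_singleton_iff {I : Ideal S} {x u : S} :
    u ∈ I ⊔ Ideal.span {x} ↔ ∃ i ∈ I, ∃ v, u = i + x * v := by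
  rw [sup_comm, Ideal.mem_span_singleton_sup]
  constructor
  · rintro ⟨v, i, hi, rfl⟩
    exact ⟨i, hi, v, by ring⟩
  · rintro ⟨i, hi, v, rfl⟩
    exact ⟨v, i, hi, by ring⟩

theorem mul_mem_sup_span_singleton (I : Ideal S) (x v : S) : x * v ∈ I ⊔ Ideal.span {x} :=
  mem_sup_span_singleton_iff.2 ⟨0, I.zero_mem, v, by ring⟩

theorem mem_of_mul_mem_of_add_mem {I : Ideal S} {i u : S} (hi : i ∈ I) (h : i + u ∈ I) : u ∈ I :=
  (I.add_mem_iff_right hi).1 h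

theorem RegularMod.pow {I : Ideal S} {x : S} (h : RegularMod I x) (k : ℕ) :
    RegularMod I (x ^ k) := by
  induction k with
  | zero => intro u hu; simpa using hu
  | succ k ih => intro u hu; exact h u (ih _ (by rwa [← mul_assoc, ← pow_succ]))

theorem RegularMod.sup_span_pow {I : Ideal S} {x y : S} (hx : RegularMod I x)
    (hy : RegularMod (I ⊔ Ideal.span {x}) y) (k : ℕ) :
    RegularMod (I ⊔ Ideal.span {x ^ k}) y := by
  induction k with
  | zero =>
    intro u _
    exact mem_sup_span_singleton_iff.2 ⟨0, I.zero_mem, u, by ring⟩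
  | succ k ih =>
    intro u hu
    obtain ⟨i, hi, v, hv⟩ := mem_sup_span_singleton_iff.1 hu
    obtain ⟨i', hi', w, rfl⟩ := mem_sup_span_singleton_iff.1
      (hy u (mem_sup_span_singleton_iff.2 ⟨i, hi, x ^ k * v, by rw [hv]; ring⟩))
    have h1 : y * w - x ^ k * v ∈ I := hx _ (by
      have : x * (y * w - x ^ k * v) = i - y * i' := by linear_combination hv
      rw [this]
      exact I.sub_mem hi (I.mul_mem_left _ hi'))
    obtain ⟨i'', hi'', w', rfl⟩ := mem_sup_span_singleton_iff.1
      (ih w (mem_sup_span_singleton_iff.2 ⟨_, h1, v, by ring⟩))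
    exact mem_sup_span_singleton_iff.2
      ⟨i' + x * i'', I.add_mem hi' (I.mul_mem_left _ hi''), w', by ring⟩

theorem RegularMod.swap_right {I : Ideal S} {y z : S} (hy : RegularMod I y)
    (hz : RegularMod (I ⊔ Ideal.span {y}) z) : RegularMod (I ⊔ Ideal.span {z}) y := by
  intro u hu
  obtain ⟨i, hi, v, hv⟩ := mem_sup_span_singleton_iff.1 hu
  obtain ⟨j, hj, w, rfl⟩ := mem_sup_span_singleton_iff.1
    (hz v (mem_sup_span_singleton_iff.2 ⟨-i, I.neg_mem hi, u, by linear_combination -hv⟩))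
  refine mem_sup_span_singleton_iff.2 ⟨u - z * w, hy _ ?_, w, by ring⟩
  have : y * (u - z * w) = i + z * j := by linear_combination hv
  rw [this]
  exact I.add_mem hi (I.mul_mem_left _ hj)

theorem exists_isPrime_annihilator [IsNoetherianRing S] {I : Ideal S} {t : S} (ht : t ∉ I) :
    ∃ Q : Ideal S, Q.IsPrime ∧ (∀ s, s * t ∈ I → s ∈ Q) ∧
      ∃ u ∉ I, ∀ s, s ∈ Q ↔ s * u ∈ I := by
  have h0 : (Ideal.Quotient.mk I t) ≠ 0 := by rwa [Ne, Ideal.Quotient.eq_zero_iff_mem]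
  obtain ⟨Q, hQ, hle⟩ := exists_le_isAssociatedPrime_of_isNoetherianRing S _ h0
  obtain ⟨hp, u, hu⟩ := isAssociatedPrime_iff.1 hQ
  obtain ⟨u, rfl⟩ := Ideal.Quotient.mk_surjective u
  have key : ∀ s v : S, s ∈ (⊥ : Submodule S (S ⧸ I)).colon {Ideal.Quotient.mk I v} ↔
      s * v ∈ I := by
    intro s v
    rw [Submodule.mem_colon_singleton, Submodule.mem_bot, ← Ideal.Quotient.eq_zero_iff_mem]
    rfl
  have hu' : ∀ s, s ∈ Q ↔ s * u ∈ I := fun s => by rw [hu, key]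
  refine ⟨Q, hp, fun s hs => hle ((key s t).2 hs), u, fun h => ?_, hu'⟩
  exact hp.one_notMem ((hu' 1).2 (by simpa using h))

theorem exists_regularMod_or [IsNoetherianRing S] (P I J : Ideal S) :
    (∃ z ∈ P, RegularMod I z ∧ RegularMod J z) ∨ (∃ t ∉ I, ∀ s ∈ P, s * t ∈ I) ∨
      (∃ t ∉ J, ∀ s ∈ P, s * t ∈ J) := by
  have key : ∀ (I : Ideal S) z, RegularMod I z ↔ IsSMulRegular (S ⧸ I) z := fun I z =>
    (isSMulRegular_quotient_iff_mem_of_smul_mem I z).symm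
  have hass : ∀ I Q : Ideal S, Q ∈ associatedPrimes S (S ⧸ I) → P ≤ Q →
      ∃ t ∉ I, ∀ s ∈ P, s * t ∈ I := by
    intro I Q hQ hPQ
    obtain ⟨hp, u, hu⟩ := isAssociatedPrime_iff.1 (AssociatedPrimes.mem_iff.1 hQ)
    obtain ⟨u, rfl⟩ := Ideal.Quotient.mk_surjective u
    have h : ∀ s, s ∈ Q ↔ s * u ∈ I := by
      intro s
      rw [hu, Submodule.mem_colon_singleton, Submodule.mem_bot, ← Ideal.Quotient.eq_zero_iff_mem]
      rfl
    exact ⟨u, fun hm => hp.one_notMem ((h 1).2 (by simpa using hm)),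
      fun s hs => (h s).1 (hPQ hs)⟩
  by_cases hz : ∃ z ∈ P, RegularMod I z ∧ RegularMod J z
  · exact Or.inl hz
  right
  push Not at hz
  have hsub : (P : Set S) ⊆ ⋃ Q ∈ associatedPrimes S (S ⧸ I) ∪ associatedPrimes S (S ⧸ J),
      ((id Q : Ideal S) : Set S) := by
    intro z hzP
    rw [Set.biUnion_union]
    simp only [id]
    rw [biUnion_associatedPrimes_eq_compl_regular, biUnion_associatedPrimes_eq_compl_regular]
    by_cases h : RegularMod I z
    · exact Or.inr fun h' => hz z hzP h ((key J z).2 h')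
    · exact Or.inl fun h' => h ((key I z).2 h')
  rw [Ideal.subset_union_prime_finite
    ((associatedPrimes.finite S (S ⧸ I)).union (associatedPrimes.finite S (S ⧸ J))) ⊥ ⊥] at hsub
  · obtain ⟨Q, hQ | hQ, hPQ⟩ := hsub
    · exact Or.inl (hass I Q hQ hPQ)
    · exact Or.inr (hass J Q hQ hPQ)
  · rintro Q (hQ | hQ) _ _
    · exact IsAssociatedPrime.isPrime hQ
    · exact IsAssociatedPrime.isPrime hQ

theorem ringKrullDim_quotient_add_one_le {Q Q' : Ideal S} [Q.IsPrime] (h : Q < Q') :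
    ringKrullDim (S ⧸ Q') + 1 ≤ ringKrullDim (S ⧸ Q) := by
  obtain ⟨x, hx', hx⟩ := SetLike.exists_of_lt h
  refine ringKrullDim_succ_le_of_surjective (Ideal.Quotient.factor h.le)
    (Ideal.Quotient.factor_surjective h.le) (r := Ideal.Quotient.mk Q x) ?_ ?_
  · exact mem_nonZeroDivisors_of_ne_zero (by rwa [Ne, Ideal.Quotient.eq_zero_iff_mem])
  · rwa [Ideal.Quotient.factor_mk, Ideal.Quotient.eq_zero_iff_mem]

theorem RegularMod.ringKrullDim_quotient_add_one_le {I : Ideal S} {x : S} (h : RegularMod I x) :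
    ringKrullDim (S ⧸ (I ⊔ Ideal.span {x})) + 1 ≤ ringKrullDim (S ⧸ I) := by
  refine ringKrullDim_succ_le_of_surjective (Ideal.Quotient.factor le_sup_left)
    (Ideal.Quotient.factor_surjective le_sup_left) (r := Ideal.Quotient.mk I x) ?_ ?_
  · rw [mem_nonZeroDivisors_iff_left]
    intro u hu
    obtain ⟨u, rfl⟩ := Ideal.Quotient.mk_surjective u
    rw [← map_mul, Ideal.Quotient.eq_zero_iff_mem] at hu
    exact Ideal.Quotient.eq_zero_iff_mem.2 (h u hu)
  · rw [Ideal.Quotient.factor_mk, Ideal.Quotient.eq_zero_iff_mem]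
    exact Submodule.mem_sup_right (Ideal.mem_span_singleton_self x)

variable [IsLocalRing S]

theorem le_of_forall_mem_sup_mul [IsNoetherianRing S] {I N : Ideal S} {x : S}
    (hx : x ∈ IsLocalRing.maximalIdeal S)
    (h : ∀ u ∈ N, ∃ i ∈ I, ∃ v ∈ N, u = i + x * v) : N ≤ I := by
  refine Submodule.le_of_le_smul_of_le_jacobson_bot (I := Ideal.span {x})
    (IsNoetherian.noetherian N) ?_ ?_
  · rw [IsLocalRing.jacobson_eq_maximalIdeal ⊥ bot_ne_top]
    exact (Ideal.span_singleton_le_iff_mem _).2 hx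
  · intro u hu
    obtain ⟨i, hi, v, hv, rfl⟩ := h u hu
    exact Submodule.add_mem_sup hi
      (Submodule.smul_mem_smul (Ideal.mem_span_singleton_self x) hv)

theorem RegularMod.swap_left [IsNoetherianRing S] {I : Ideal S} {y z : S}
    (hym : y ∈ IsLocalRing.maximalIdeal S) (hy : RegularMod I y)
    (hz : RegularMod (I ⊔ Ideal.span {y}) z) : RegularMod I z := by
  have key : Submodule.comap (LinearMap.mulLeft S z) I ≤ I := by
    refine le_of_forall_mem_sup_mul hym fun u hu => ?_
    have hu : z * u ∈ I := hu
    obtain ⟨i, hi, v, rfl⟩ := mem_sup_span_singleton_iff.1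
      (hz u (Submodule.mem_sup_left hu))
    refine ⟨i, hi, v, hy _ ?_, rfl⟩
    change y * (z * v) ∈ I
    refine mem_of_mul_mem_of_add_mem (I.mul_mem_left z hi) ?_
    convert hu using 1
    ring
  intro u hu
  exact key hu

theorem DepthAtLeast.ne_top {n : ℕ} {I : Ideal S} (h : DepthAtLeast n I) : I ≠ ⊤ := by
  induction n generalizing I with
  | zero => exact h
  | succ n ih =>
    obtain ⟨x, -, -, h⟩ := h
    rintro rfl
    exact ih h (by simp)

theorem DepthAtLeast.sup_span_singleton [IsNoetherianRing S] {n : ℕ} {I : Ideal S} {x : S}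
    (h : DepthAtLeast (n + 1) I) (hxm : x ∈ IsLocalRing.maximalIdeal S) (hx : RegularMod I x) :
    DepthAtLeast n (I ⊔ Ideal.span {x}) := by
  induction n generalizing I x with
  | zero =>
    have hle : I ⊔ Ideal.span {x} ≤ IsLocalRing.maximalIdeal S :=
      sup_le (IsLocalRing.le_maximalIdeal h.ne_top) ((Ideal.span_singleton_le_iff_mem _).2 hxm)
    exact fun h => (IsLocalRing.maximalIdeal.isMaximal S).ne_top (top_le_iff.1 (h ▸ hle))
  | succ n ih =>
    obtain ⟨y, hym, hy, hd⟩ := h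
    obtain ⟨y', hym', hy', -⟩ := id hd
    have hsoc : ∀ t, (∀ s ∈ IsLocalRing.maximalIdeal S, s * t ∈ I ⊔ Ideal.span {y}) →
        t ∈ I ⊔ Ideal.span {y} := fun t ht => hy' t (ht y' hym')
    obtain ⟨z, hzm, hzx, hzy⟩ | ⟨t, ht, hs⟩ | ⟨t, ht, hs⟩ := exists_regularMod_or
      (IsLocalRing.maximalIdeal S) (I ⊔ Ideal.span {x}) (I ⊔ Ideal.span {y})
    · have hz : RegularMod I z := hy.swap_left hym hzy
      have h1 : DepthAtLeast (n + 1) (I ⊔ Ideal.span {z}) := by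
        refine ⟨y, hym, hy.swap_right hzy, ?_⟩
        rw [sup_right_comm]
        exact ih hd hzm hzy
      refine ⟨z, hzm, hzx, ?_⟩
      rw [sup_right_comm]
      exact ih h1 hxm (hx.swap_right hzx)
    · refine absurd ?_ ht
      obtain ⟨i, hi, v, hv⟩ := mem_sup_span_singleton_iff.1 (hs y hym)
      have hvm : v ∈ I ⊔ Ideal.span {y} := by
        refine hsoc v fun s hsm => ?_
        obtain ⟨j, hj, w, hw⟩ := mem_sup_span_singleton_iff.1 (hs s hsm)
        refine mem_sup_span_singleton_iff.2 ⟨s * v - y * w, hx _ ?_, w, by ring⟩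
        have : x * (s * v - y * w) = y * j - s * i := by linear_combination y * hw - s * hv
        rw [this]
        exact I.sub_mem (I.mul_mem_left _ hj) (I.mul_mem_left _ hi)
      obtain ⟨j, hj, w, rfl⟩ := mem_sup_span_singleton_iff.1 hvm
      refine mem_sup_span_singleton_iff.2 ⟨t - x * w, hy _ ?_, w, by ring⟩
      have : y * (t - x * w) = i + x * j := by linear_combination hv
      rw [this]
      exact I.add_mem hi (I.mul_mem_left _ hj)
    · exact absurd (hsoc t hs) ht

theorem DepthAtLeast.le_ringKrullDim_quotient [IsNoetherianRing S] {n : ℕ} {I Q : Ideal S}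
    (h : DepthAtLeast n I) [Q.IsPrime] {t : S} (ht : t ∉ I) (hQ : ∀ s ∈ Q, s * t ∈ I) :
    (n : WithBot ℕ∞) ≤ ringKrullDim (S ⧸ Q) := by
  induction n generalizing I Q t with
  | zero => exact ringKrullDim_nonneg_of_nontrivial
  | succ n ih =>
    obtain ⟨x, hxm, hx, hd⟩ := h
    have hex : ∃ u ∉ I ⊔ Ideal.span {x}, ∀ s ∈ Q, s * u ∈ I := by
      by_contra! hcon
      let N : Ideal S := ⨅ s ∈ Q, Submodule.comap (LinearMap.mulLeft S s) I
      have hN : ∀ u, u ∈ N ↔ ∀ s ∈ Q, s * u ∈ I := by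
        intro u
        simp [N]
      have key : N ≤ I := by
        refine le_of_forall_mem_sup_mul hxm fun u hu => ?_
        rw [hN] at hu
        have hmem : u ∈ I ⊔ Ideal.span {x} := by
          by_contra hu'
          obtain ⟨s, hs, hs'⟩ := hcon u hu'
          exact hs' (hu s hs)
        obtain ⟨i, hi, v, rfl⟩ := mem_sup_span_singleton_iff.1 hmem
        refine ⟨i, hi, v, (hN v).2 fun s hs => hx _ ?_, rfl⟩
        refine mem_of_mul_mem_of_add_mem (I.mul_mem_left s hi) ?_
        convert hu s hs using 1
        ring
      exact ht (key ((hN t).2 hQ))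
    obtain ⟨u, hu, hQu⟩ := hex
    obtain ⟨Q', hQ', hann, t', ht', hQt'⟩ := exists_isPrime_annihilator hu
    have hlt : Q < Q' := by
      refine lt_of_le_of_ne (fun s hs => hann s (Submodule.mem_sup_left (hQu s hs))) ?_
      rintro rfl
      exact ht (hx t (hQ x (hann x (mul_mem_sup_span_singleton I x u))))
    refine le_trans ?_ (_root_.ringKrullDim_quotient_add_one_le hlt)
    push_cast
    gcongr
    exact ih hd ht' fun s hs => (hQt' s).1 hs

theorem exists_depthAtLeast_two [IsNoetherianRing S] {n : ℕ} {I P : Ideal S}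
    (h : DepthAtLeast n I) [P.IsPrime] (hIP : I ≤ P) (hP : ringKrullDim (S ⧸ P) = 2)
    (hI : ringKrullDim (S ⧸ I) ≤ n) :
    ∃ J : Ideal S, DepthAtLeast 2 J ∧ ∃ t, ∀ s, s ∈ P ↔ s * t ∈ J := by
  induction n generalizing I with
  | zero =>
    have := (ringKrullDim_le_of_surjective _ (Ideal.Quotient.factor_surjective hIP)).trans hI
    rw [hP] at this
    exact absurd this (by decide)
  | succ n ih =>
    rcases exists_regularMod_or P I I with ⟨z, hz, hreg, -⟩ | h' | h'
    · refine ih (h.sup_span_singleton (IsLocalRing.le_maximalIdeal (Ideal.IsPrime.ne_top') hz)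
        hreg) (sup_le hIP ((Ideal.span_singleton_le_iff_mem _).2 hz)) ?_
      have := hreg.ringKrullDim_quotient_add_one_le.trans hI
      push_cast at this
      exact ENat.WithBot.add_le_add_one_right_iff.1 this
    all_goals
      obtain ⟨t, ht, hPt⟩ := h'
      obtain ⟨Q, hQ, hann, u, hu, hQu⟩ := exists_isPrime_annihilator ht
      have hPQ : P ≤ Q := fun s hs => hann s (hPt s hs)
      have hn := h.le_ringKrullDim_quotient hu fun s hs => (hQu s).1 hs
      have h2 : (2 : WithBot ℕ∞) ≤ (n + 1 : ℕ) := by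
        rw [← hP]
        exact (ringKrullDim_le_of_surjective _ (Ideal.Quotient.factor_surjective hIP)).trans hI
      have hQP : P = Q := by
        by_contra hne
        have h3 := ringKrullDim_quotient_add_one_le (lt_of_le_of_ne hPQ hne)
        have h4 := (add_le_add_left (h2.trans hn) 1).trans h3
        rw [hP] at h4
        exact absurd h4 (by decide)
      subst hQP
      rw [hP] at hn
      have h5 : n + 1 = 2 := by
        apply le_antisymm
        · exact_mod_cast hn
        · exact_mod_cast h2
      rw [h5] at h
      exact ⟨I, h, u, hQu⟩

theorem depthAtLeast_length (l : List S) {I : Ideal S} (hI : I ≠ ⊤) (hl : ∀ x ∈ l, ¬ IsUnit x)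
    (h : ∀ (i : ℕ) (hi : i < l.length), RegularMod (I ⊔ Ideal.ofList (l.take i)) l[i]) :
    DepthAtLeast l.length I := by
  induction l generalizing I with
  | nil => exact hI
  | cons x l ih =>
    have hx : x ∈ IsLocalRing.maximalIdeal S := hl x (by simp)
    have h0 := h 0 (Nat.succ_pos _)
    rw [List.take_zero, Ideal.ofList_nil, sup_bot_eq] at h0
    refine ⟨x, hx, h0, ih ?_ (fun y hy => hl y (by simp [hy])) ?_⟩
    · have hle : I ⊔ Ideal.span {x} ≤ IsLocalRing.maximalIdeal S :=
        sup_le (IsLocalRing.le_maximalIdeal hI) ((Ideal.span_singleton_le_iff_mem _).2 hx)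
      exact fun h => (IsLocalRing.maximalIdeal.isMaximal S).ne_top (top_le_iff.1 (h ▸ hle))
    · intro i hi
      have := h (i + 1) (by simpa using hi)
      simpa [Ideal.ofList_cons, sup_assoc] using this

end Depth
open Polynomial in
theorem exists_monic_eval_scaleRoots_mem {S : Type*} [CommRing S] [IsNoetherianRing S]
    {I P : Ideal S} {α β γ δ j ε t : S} (hα : RegularMod I α)
    (hβ : RegularMod (I ⊔ Ideal.span {α}) β) (hP : ∀ s, s ∈ P ↔ s * t ∈ I)
    (h : β * γ - α * δ ∈ P) (hj : j * γ - α * ε ∈ P) :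
    ∃ g : S[X], g.Monic ∧ (g.scaleRoots j).eval ε ∈ P := by
  let W : Submodule S (S ⧸ I) := Submodule.torsionBySet S (S ⧸ I) P
  have hW : ∀ u : S, Ideal.Quotient.mk I u ∈ W ↔ ∀ p ∈ P, p * u ∈ I := by
    intro u
    rw [Submodule.mem_torsionBySet_iff]
    refine ⟨fun h p hp => Ideal.Quotient.eq_zero_iff_mem.1 (h ⟨p, hp⟩), fun h p =>
      Ideal.Quotient.eq_zero_iff_mem.2 (h p p.2)⟩
  have hPW : ∀ p ∈ P, ∀ w : W, p • w = 0 := fun p hp w =>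
    Subtype.ext ((Submodule.mem_torsionBySet_iff _ _).1 w.2 ⟨p, hp⟩)
  clear_value W
  have hex : ∀ w : W, ∃ z : W, α • z = γ • w := by
    rintro ⟨w, hw⟩
    obtain ⟨u, rfl⟩ := Ideal.Quotient.mk_surjective w
    have hu := (hW u).1 hw
    have h1 : γ * u ∈ I ⊔ Ideal.span {α} := by
      refine hβ _ (mem_sup_span_singleton_iff.2 ⟨_, hu _ h, δ * u, by ring⟩)
    obtain ⟨i, hi, z, hz⟩ := mem_sup_span_singleton_iff.1 h1
    refine ⟨⟨Ideal.Quotient.mk I z, (hW z).2 fun p hp => hα _ ?_⟩, Subtype.ext ?_⟩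
    · have : α * (p * z) = γ * (p * u) - p * i := by linear_combination -p * hz
      rw [this]
      exact I.sub_mem (I.mul_mem_left _ (hu p hp)) (I.mul_mem_left _ hi)
    · change Ideal.Quotient.mk I (α * z) = Ideal.Quotient.mk I (γ * u)
      rw [Ideal.Quotient.eq]
      have : α * z - γ * u = -i := by linear_combination -hz
      rw [this]
      exact I.neg_mem hi
  have hinj : ∀ w w' : W, α • w = α • w' → w = w' := by
    intro w w' hww
    replace hww : α • (w - w') = 0 := (smul_sub α w w').trans (sub_eq_zero.2 hww)
    rw [← sub_eq_zero]
    generalize w - w' = v at hww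
    obtain ⟨v, hv⟩ := v
    obtain ⟨u, rfl⟩ := Ideal.Quotient.mk_surjective v
    have h0 : Ideal.Quotient.mk I (α * u) = 0 := congrArg Subtype.val hww
    exact Subtype.ext (Ideal.Quotient.eq_zero_iff_mem.2
      (hα u (Ideal.Quotient.eq_zero_iff_mem.1 h0)))
  choose φ hφ using hex
  let Φ : Module.End S W :=
    { toFun := φ
      map_add' := fun x y => hinj _ _ (by rw [smul_add, hφ, hφ, hφ, smul_add])
      map_smul' := fun s x => hinj _ _ (by
        rw [hφ, RingHom.id_apply, smul_comm α s, hφ, smul_comm]) }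
  have hΦ : algebraMap S (Module.End S W) ε = algebraMap S (Module.End S W) j * Φ := by
    ext1 w
    refine hinj _ _ ?_
    change α • ε • w = α • j • φ w
    rw [smul_comm α j, hφ, ← sub_eq_zero, smul_smul, smul_smul, ← sub_smul, ← neg_sub, neg_smul,
      hPW _ hj, neg_zero]
  obtain ⟨g, hg, hg0⟩ := LinearMap.exists_monic_and_aeval_eq_zero S Φ
  refine ⟨g, hg, (hP _).2 ?_⟩
  have h0 := Polynomial.scaleRoots_aeval_eq_zero (r := j) hg0
  rw [← hΦ, Polynomial.aeval_algebraMap_apply, Polynomial.coe_aeval_eq_eval] at h0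
  have h1 := congrArg Subtype.val (LinearMap.congr_fun h0
    ⟨Ideal.Quotient.mk I t, (hW t).2 fun p hp => (hP p).1 hp⟩)
  exact Ideal.Quotient.eq_zero_iff_mem.1 h1
theorem GorensteinLocalRing.exists_depthAtLeast {S : Type*} [CommRing S] [IsLocalRing S]
    (h : GorensteinLocalRing S) :
    ∃ n : ℕ, ringKrullDim S = n ∧ DepthAtLeast n (⊥ : Ideal S) := by
  obtain ⟨-, -, l, hl, hdim, hreg, -⟩ := h
  refine ⟨l.length, hdim.symm, depthAtLeast_length l bot_ne_top hl fun i hi => ?_⟩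
  have := (isSMulRegular_quotient_iff_mem_of_smul_mem _ _).1 (hreg.regular_mod_prev i hi)
  simpa [RegularMod] using this

section IdealHt

variable {R : Type*} [CommRing R]

theorem le_idealHt_iff_s18 {I : Ideal R} {n : ℕ∞} :
    n ≤ idealHt I ↔ ∀ p : Ideal R, p.IsPrime → I ≤ p → n ≤ p.height := by
  simp only [idealHt, le_iInf_iff, Set.mem_ofPred_eq]
  constructor
  · intro h p hp hI
    exact (h ⟨p, hp⟩ hI).trans_eq (PrimeSpectrum.height_eq_orderHeight ⟨p, hp⟩).symm
  · intro h p hI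
    exact (h p.asIdeal p.2 hI).trans_eq (PrimeSpectrum.height_eq_orderHeight p)

theorem idealHt_eq_height (p : Ideal R) [p.IsPrime] : idealHt p = p.height := by
  refine le_antisymm (le_idealHt_iff_s18.1 le_rfl p ‹_› le_rfl)
    (le_idealHt_iff_s18.2 fun q _ hq => Ideal.height_mono hq)

theorem ringKrullDim_quotient_eq_two [IsNoetherianRing R] (hdim : ringKrullDim R = 2)
    (hunmixed : ∀ p ∈ minimalPrimes R, ∀ q ∈ minimalPrimes R,
      ringKrullDim (R ⧸ p) = ringKrullDim (R ⧸ q))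
    {p : Ideal R} (hp : p ∈ minimalPrimes R) : ringKrullDim (R ⧸ p) = 2 := by
  refine le_antisymm (hdim ▸ ringKrullDim_quotient_le p) ?_
  have h2 : ((2 : ℕ) : WithBot ℕ∞) ≤ Order.krullDim (PrimeSpectrum R) := hdim.ge
  obtain ⟨c, hc⟩ := Order.le_krullDim_iff.1 h2
  obtain ⟨q, hq, hqc⟩ := Ideal.exists_minimalPrimes_le (I := ⊥) (J := c.head.asIdeal) bot_le
  rw [hunmixed p hp q hq, ringKrullDim_quotient]
  refine Order.le_krullDim_iff.2 ⟨⟨c.length, fun i => ⟨c i, ?_⟩, fun i => c.step i⟩, hc⟩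
  exact hqc.trans (c.head_le i)

variable [IsLocalRing R]

theorem height_maximalIdeal_of_ringKrullDim_eq_two (hdim : ringKrullDim R = 2) :
    (IsLocalRing.maximalIdeal R).height = 2 := by
  have := IsLocalRing.maximalIdeal_height_eq_ringKrullDim (R := R)
  rw [hdim] at this
  exact WithBot.coe_injective this

theorem eq_maximalIdeal_of_two_le_height (hdim : ringKrullDim R = 2) {p : Ideal R} [p.IsPrime]
    (h : 2 ≤ p.height) : p = IsLocalRing.maximalIdeal R := by
  by_contra hne
  have hlt : p < IsLocalRing.maximalIdeal R :=
    lt_of_le_of_ne (IsLocalRing.le_maximalIdeal (Ideal.IsPrime.ne_top')) hne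
  have h1 := Ideal.height_add_one_le_of_lt_of_isPrime hlt
  rw [height_maximalIdeal_of_ringKrullDim_eq_two hdim] at h1
  exact absurd ((add_le_add_left h 1).trans h1) (by decide)

theorem maximalIdeal_le_radical_of_two_le_idealHt (hdim : ringKrullDim R = 2) {I : Ideal R}
    (h : 2 ≤ idealHt I) : IsLocalRing.maximalIdeal R ≤ I.radical := by
  rw [Ideal.radical_eq_sInf]
  refine le_sInf ?_
  rintro p ⟨hI, hp⟩
  exact (eq_maximalIdeal_of_two_le_height hdim (le_idealHt_iff_s18.1 h p hp hI)).ge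

theorem two_le_idealHt_of_radical_eq (hdim : ringKrullDim R = 2) {I : Ideal R}
    (h : I.radical = IsLocalRing.maximalIdeal R) : 2 ≤ idealHt I := by
  refine le_idealHt_iff_s18.2 fun p hp hI => ?_
  rw [← height_maximalIdeal_of_ringKrullDim_eq_two hdim, ← h]
  exact Ideal.height_mono (hp.radical_le_iff.2 hI)

end IdealHt

section Integral

variable {R : Type*} [CommRing R] [IsLocalRing R]

open Polynomial in
theorem exists_monic_aeval_mul_eq_of_mem_minimalPrimes {S : Type*} [CommRing S]
    [IsNoetherianRing S] [IsLocalRing S] {n : ℕ} (hS : ringKrullDim S = n)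
    (hd : DepthAtLeast n (⊥ : Ideal S)) (π : S →+* R) (hπ : Function.Surjective π)
    {p : Ideal R} [p.IsPrime] (hp : ringKrullDim (R ⧸ p) = 2) {a : R}
    (ha : a ∈ nonZeroDivisors R) (ham : a ∈ IsLocalRing.maximalIdeal R)
    {f : FractionRing R} (hf : ∀ r ∈ IsLocalRing.maximalIdeal R, ∃ k : ℕ, ∃ s : R,
      algebraMap R (FractionRing R) (r ^ k) * f = algebraMap R (FractionRing R) s) :
    ∃ g : R[X], g.Monic ∧ ∃ c ∈ nonZeroDivisors R, ∃ r ∈ p,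
      algebraMap R (FractionRing R) c * aeval f g = algebraMap R (FractionRing R) r := by
  have : IsLocalHom π := IsLocalHom.of_surjective π hπ
  have hP : ringKrullDim (S ⧸ p.comap π) = 2 := by
    rw [← hp]
    refine ringKrullDim_eq_of_ringEquiv (RingEquiv.ofBijective (Ideal.quotientMap p π le_rfl)
      ⟨Ideal.quotientMap_injective, Ideal.quotientMap_surjective hπ⟩)
  obtain ⟨J, ⟨α, hαm, hα, β, hβm, hβ, -⟩, t, ht⟩ := exists_depthAtLeast_two hd (P := p.comap π)
    bot_le hP (hS ▸ ringKrullDim_quotient_le ⊥)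
  have hmem : ∀ x ∈ IsLocalRing.maximalIdeal S, ∃ k : ℕ, ∃ y : S,
      algebraMap R (FractionRing R) (π (x ^ k)) * f = algebraMap R (FractionRing R) (π y) := by
    intro x hx
    obtain ⟨k, s, hs⟩ := hf (π x) (map_nonunit π x hx)
    obtain ⟨y, rfl⟩ := hπ s
    exact ⟨k, y, by rw [map_pow π, hs]⟩
  obtain ⟨k, γ, hγ⟩ := hmem α hαm
  obtain ⟨l, δ, hδ⟩ := hmem β hβm
  obtain ⟨m, s, hs⟩ := hf a ham
  obtain ⟨j, hj⟩ := hπ (a ^ m)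
  obtain ⟨ε, rfl⟩ := hπ s
  rw [← hj] at hs
  have hcross : ∀ {x y x' y' : S},
      algebraMap R (FractionRing R) (π x) * f = algebraMap R (FractionRing R) (π y) →
      algebraMap R (FractionRing R) (π x') * f = algebraMap R (FractionRing R) (π y') →
      x' * y - x * y' ∈ p.comap π := by
    intro x y x' y' h h'
    have h0 : π (x' * y - x * y') = 0 := by
      apply IsFractionRing.injective R (FractionRing R)
      simp only [map_sub, map_mul, map_zero]
      rw [← h, ← h']
      ring
    rw [Ideal.mem_comap, h0]
    exact p.zero_mem
  obtain ⟨g, hg, hgP⟩ := exists_monic_eval_scaleRoots_mem (hα.pow k)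
    ((hα.sup_span_pow hβ k).pow l) ht (hcross hγ hδ) (hcross hγ hs)
  refine ⟨g.map π, hg.map π, π j ^ g.natDegree, ?_, _, hgP, ?_⟩
  · rw [hj]
    exact pow_mem (pow_mem ha _) _
  · have := Polynomial.scaleRoots_eval₂_mul (p := g) ((algebraMap R (FractionRing R)).comp π) f j
    rw [RingHom.comp_apply, hs, ← RingHom.comp_apply, Polynomial.eval₂_at_apply] at this
    rw [Polynomial.aeval_def, Polynomial.eval₂_map, map_pow]
    exact this.symm

open Polynomial in
theorem isIntegral_of_forall_exists_pow_mul_eq [IsNoetherianRing R] (hdim : ringKrullDim R = 2)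
    (hunmixed : ∀ p ∈ minimalPrimes R, ∀ q ∈ minimalPrimes R,
      ringKrullDim (R ⧸ p) = ringKrullDim (R ⧸ q))
    {S : Type*} [CommRing S] (hS : GorensteinLocalRing S) (π : S →+* R)
    (hπ : Function.Surjective π) {a : R}
    (ha : a ∈ nonZeroDivisors R) (ham : a ∈ IsLocalRing.maximalIdeal R)
    {f : FractionRing R} (hf : ∀ r ∈ IsLocalRing.maximalIdeal R, ∃ k : ℕ, ∃ s : R,
      algebraMap R (FractionRing R) (r ^ k) * f = algebraMap R (FractionRing R) s) :
    IsIntegral R f := by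
  have := hS.1
  have := hS.2.1
  obtain ⟨n, hn, hd⟩ := hS.exists_depthAtLeast
  have hfin := minimalPrimes.finite_of_isNoetherianRing R
  have key : ∀ p : minimalPrimes R, ∃ g : R[X], g.Monic ∧ ∃ c ∈ nonZeroDivisors R,
      ∃ r ∈ (p : Ideal R), algebraMap R (FractionRing R) c * aeval f g =
        algebraMap R (FractionRing R) r := fun p =>
    have : (p : Ideal R).IsPrime := p.2.1.1
    exists_monic_aeval_mul_eq_of_mem_minimalPrimes hn hd π hπ
      (ringKrullDim_quotient_eq_two hdim hunmixed p.2) ha ham hf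
  choose g hg c hc r hr h using key
  have := hfin.fintype
  have hprod : algebraMap R (FractionRing R) (∏ p, c p) * aeval f (∏ p, g p) =
      algebraMap R (FractionRing R) (∏ p, r p) := by
    simp only [map_prod, ← Finset.prod_mul_distrib, h]
  have hnil : IsNilpotent (∏ p, r p) := by
    rw [← mem_nilradical, nilradical, Ideal.radical_eq_sInf, Submodule.mem_sInf]
    rintro q ⟨-, hq⟩
    obtain ⟨p, hp, hpq⟩ := Ideal.exists_minimalPrimes_le (I := ⊥) (J := q) bot_le
    exact hpq (Ideal.mem_of_dvd _ (Finset.dvd_prod_of_mem r (Finset.mem_univ ⟨p, hp⟩)) (hr ⟨p, hp⟩))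
  obtain ⟨N, hN⟩ := hnil
  have hunit : IsUnit (algebraMap R (FractionRing R) (∏ p, c p)) :=
    IsLocalization.map_units (FractionRing R)
      (⟨∏ p, c p, prod_mem fun p _ => hc p⟩ : nonZeroDivisors R)
  refine ⟨(∏ p, g p) ^ N, (monic_prod_of_monic _ _ fun p _ => hg p).pow N, ?_⟩
  rw [← Polynomial.aeval_def, map_pow, ← (hunit.pow N).mul_right_eq_zero, ← mul_pow, hprod,
    ← map_pow, hN, map_zero]

end Integral

theorem mul_mem_span_singleton_of_pow_mul_mem {R : Type*} [CommRing R] {a b x : R}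
    (hcolon : (Ideal.span {a}).colon (Ideal.span {b}) =
      (Ideal.span {a}).colon (Ideal.span {b ^ 2})) (n : ℕ)
    (h : x * b ^ n ∈ Ideal.span {a}) : x * b ∈ Ideal.span {a} := by
  induction n with
  | zero => exact Ideal.mul_mem_right _ _ (by simpa using h)
  | succ n ih =>
    cases n with
    | zero => simpa using h
    | succ n =>
      refine ih ?_
      have : x * b ^ n ∈ (Ideal.span {a}).colon (Ideal.span {b}) := by
        rw [hcolon, Ideal.mem_colon_span_singleton]
        convert h using 1
        ring
      rw [Ideal.mem_colon_span_singleton] at this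
      convert this using 1
      ring

theorem mem_colon_of_forall_minimalPrimes {R : Type*} [CommRing R] [IsNoetherianRing R]
    [IsLocalRing R] (hdim : ringKrullDim R = 2) {a b x : R} (ha : a ∈ nonZeroDivisors R)
    (hbm : b ∈ IsLocalRing.maximalIdeal R)
    (hcolon : (Ideal.span {a}).colon (Ideal.span {b}) =
      (Ideal.span {a}).colon (Ideal.span {b ^ 2}))
    (hx : ∀ p ∈ (Ideal.span {a}).minimalPrimes, p.height = 1 →
      ∃ s, s ∉ p ∧ s * x ∈ Ideal.span {a}) :
    x * b ∈ Ideal.span {a} := by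
  have hht : 2 ≤ idealHt ((Ideal.span {a}).colon (Ideal.span {x})) := by
    refine le_idealHt_iff_s18.2 fun q hq hle => ?_
    have haq : Ideal.span {a} ≤ q := fun s hs =>
      hle (Ideal.mem_colon_span_singleton.2 (Ideal.mul_mem_right _ _ hs))
    obtain ⟨p, hp, hpq⟩ := Ideal.exists_minimalPrimes_le haq
    have := hp.1.1
    have h1 : p.height = 1 := le_antisymm
      (Ideal.height_le_one_of_isPrincipal_of_mem_minimalPrimes _ p hp)
      ((Ideal.one_le_height_span_singleton_of_mem_nonZeroDivisors ha).trans
        (Ideal.height_mono hp.1.2))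
    obtain ⟨s, hs, hsx⟩ := hx p hp h1
    have hlt : p < q := lt_of_le_of_ne hpq (by
      rintro rfl
      exact hs (hle (Ideal.mem_colon_span_singleton.2 hsx)))
    have h2 := Ideal.height_add_one_le_of_lt_of_isPrime hlt
    rw [h1] at h2
    exact h2
  obtain ⟨n, hn⟩ := maximalIdeal_le_radical_of_two_le_idealHt hdim hht hbm
  rw [Ideal.mem_colon_span_singleton, mul_comm] at hn
  exact mul_mem_span_singleton_of_pow_mul_mem hcolon n hn

/-- let `(R,𝔪)` be a 2-dimensional Noetherian local ring whose
minimal primes all have the same codimension, possessing a canonical module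
(equivalently, in the convention of the paper, being a homomorphic image of a
Gorenstein local ring), and whose integral closure `R̄` in `Q(R)` is a finite
`R`-module. For non-zerodivisors `a, b ∈ 𝔪` with `a ∈ R : R̄`, `a, b` a system
of parameters, and `aR :_R b = aR :_R b²`, one has `U(aR) = aR :_R b` and hence
`R̃ = R/a ∩ R/b` inside `Q(R)`. -/
theorem stmt18 {R : Type u} [CommRing R] [IsNoetherianRing R] [IsLocalRing R]
    (hdim : ringKrullDim R = 2)
    (hunmixed : ∀ p ∈ minimalPrimes R, ∀ q ∈ minimalPrimes R,
      ringKrullDim (R ⧸ p) = ringKrullDim (R ⧸ q))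
    (hcan : ∃ (S : Type u) (_ : CommRing S), GorensteinLocalRing S ∧
      ∃ f : S →+* R, Function.Surjective f)
    (hbar : ((integralClosure R (FractionRing R)).toSubmodule :
      Submodule R (FractionRing R)).FG)
    (a b : R)
    (ha : a ∈ nonZeroDivisors R) (hb : b ∈ nonZeroDivisors R)
    (ham : a ∈ IsLocalRing.maximalIdeal R) (hbm : b ∈ IsLocalRing.maximalIdeal R)
    (hcond : ∀ u : FractionRing R, IsIntegral R u →
      ∃ r : R, a • u = algebraMap R (FractionRing R) r)
    (hsop : (Ideal.span {a, b}).radical = IsLocalRing.maximalIdeal R)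
    (hcolon : (Ideal.span {a}).colon (Ideal.span {b}) =
      (Ideal.span {a}).colon (Ideal.span {b ^ 2})) :
    (⋂ p ∈ {p : Ideal R | p ∈ (Ideal.span {a}).minimalPrimes ∧ idealHt p = 1},
        {x : R | ∃ s, s ∉ p ∧ s * x ∈ Ideal.span {a}}) =
      ↑((Ideal.span {a}).colon (Ideal.span {b})) ∧
    {f : FractionRing R | ∃ I : Ideal R, 2 ≤ idealHt I ∧
        ∀ i ∈ I, i • f ∈ Set.range (algebraMap R (FractionRing R))} =
      {f | a • f ∈ Set.range (algebraMap R (FractionRing R))} ∩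
        {f | b • f ∈ Set.range (algebraMap R (FractionRing R))} := by
  have hU : ∀ x : R, x * b ∈ Ideal.span {a} ↔ ∀ p ∈ (Ideal.span {a}).minimalPrimes,
      p.height = 1 → ∃ s, s ∉ p ∧ s * x ∈ Ideal.span {a} := by
    refine fun x => ⟨fun h p hp h1 => ⟨b, fun hbp => ?_, by rwa [mul_comm]⟩,
      mem_colon_of_forall_minimalPrimes hdim ha hbm hcolon⟩
    have := hp.1.1
    have h2 := le_idealHt_iff_s18.1 (two_le_idealHt_of_radical_eq hdim hsop) p this
      (Ideal.span_le.2 (Set.pair_subset (hp.1.2 (Ideal.mem_span_singleton_self a)) hbp))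
    rw [h1] at h2
    exact absurd h2 (by decide)
  refine ⟨?_, ?_⟩
  · ext x
    simp only [Set.mem_iInter, Set.mem_ofPred_eq, SetLike.mem_coe, and_imp]
    rw [Ideal.mem_colon_span_singleton, hU]
    refine forall_congr' fun p => forall_congr' fun hp => ?_
    have := hp.1.1
    rw [idealHt_eq_height]
  · ext f
    simp only [Set.mem_inter_iff, Set.mem_ofPred_eq, Set.mem_range, Algebra.smul_def]
    constructor
    · rintro ⟨I, hI, hf⟩
      have hpow : ∀ r ∈ IsLocalRing.maximalIdeal R, ∃ k : ℕ, ∃ s : R,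
          algebraMap R (FractionRing R) (r ^ k) * f = algebraMap R (FractionRing R) s := by
        intro r hr
        obtain ⟨k, hk⟩ := maximalIdeal_le_radical_of_two_le_idealHt hdim hI hr
        obtain ⟨s, hs⟩ := hf _ hk
        exact ⟨k, s, hs.symm⟩
      obtain ⟨S, _, hS, π, hπ⟩ := hcan
      obtain ⟨x, hx⟩ := hcond f
        (isIntegral_of_forall_exists_pow_mul_eq hdim hunmixed hS π hπ ha ham hpow)
      rw [Algebra.smul_def] at hx
      refine ⟨⟨x, hx.symm⟩, ?_⟩
      obtain ⟨k, s, hs⟩ := hpow b hbm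
      have hxk : x * b ^ k ∈ Ideal.span {a} := by
        refine Ideal.mem_span_singleton.2 ⟨s, IsFractionRing.injective R (FractionRing R) ?_⟩
        rw [map_mul, map_mul, ← hx, ← hs]
        ring
      obtain ⟨y, hy⟩ := Ideal.mem_span_singleton.1
        (mul_mem_span_singleton_of_pow_mul_mem hcolon k hxk)
      refine ⟨y, ?_⟩
      have hunit : IsUnit (algebraMap R (FractionRing R) a) :=
        IsLocalization.map_units (FractionRing R) (⟨a, ha⟩ : nonZeroDivisors R)
      refine hunit.mul_left_cancel ?_
      rw [← map_mul, ← hy, map_mul, ← hx]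
      ring
    · rintro ⟨⟨x, hx⟩, ⟨y, hy⟩⟩
      refine ⟨Ideal.span {a, b}, two_le_idealHt_of_radical_eq hdim hsop, fun i hi => ?_⟩
      obtain ⟨u, v, rfl⟩ := Ideal.mem_span_pair.1 hi
      refine ⟨u * x + v * y, ?_⟩
      simp only [map_add, map_mul, hx, hy]
      ring
end
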